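/- There exists a constant C > 0 such that the following holds for every integer n ≥ 2 and every integer b ≥ 1 with m = b². Let x_1,…,x_n and y_1,…,y_n be 2n mutually independent uniformly distributed random points in the unit square [0,1]² ⊂ ℝ², partition [0,1]² into m congruent squares q_1,…,q_m of side 1/b (taken half-open so each point lies in exactly one square), and for each square q_i let A_i := { j : x_j ∈ q_i } and B_i := { j : y_j ∈ q_i }. Call a permutation σ of {1,…,n} locally maximal if for every i, #{ j ∈ A_i : σ(j) ∈ B_i } = min(|A_i|, |B_i|). Then E[ min over locally maximal permutations σ of Σ_{j=1}^n ‖x_j − y_{σ(j)}‖₂ ] ≤ C·sqrt( n·log n ) + sqrt( n(m−1) ). -/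

import Mathlib

open MeasureTheory

/-- The closed unit square `[0,1]² ⊂ ℝ²` (with the Euclidean norm). -/
def unitSquare : Set (EuclideanSpace ℝ (Fin 2)) :=
  {p | ∀ i, p i ∈ Set.Icc (0 : ℝ) 1}

/-- The uniform probability measure on the unit square. -/
noncomputable def unifSquare : Measure (EuclideanSpace ℝ (Fin 2)) :=
  volume.restrict unitSquare

/-- The `m = b²` half-open congruent squares of side `1/b` partitioning the unit square:
`gridSquare b (i, j) = [i/b, (i+1)/b) × [j/b, (j+1)/b)` (so every point lies in at most one
square, and almost every point of the unit square lies in exactly one). -/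
def gridSquare (b : ℕ) (ij : Fin b × Fin b) : Set (EuclideanSpace ℝ (Fin 2)) :=
  {p | p 0 ∈ Set.Ico ((ij.1 : ℝ) / b) (((ij.1 : ℝ) + 1) / b) ∧
       p 1 ∈ Set.Ico ((ij.2 : ℝ) / b) (((ij.2 : ℝ) + 1) / b)}

/-- A permutation `σ` (assigning robot `j` at `x j` to target `σ j` at `y (σ j)`) is locally
maximal if within every grid square it matches the maximum possible number
`min (#A_i) (#B_i)` of robots in the square to targets in the same square, where
`A_i` (resp. `B_i`) is the set of indices of robots (resp. targets) in the square. -/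
def IsLocallyMaximal {n b : ℕ} (x y : Fin n → EuclideanSpace ℝ (Fin 2))
    (σ : Equiv.Perm (Fin n)) : Prop :=
  ∀ ij : Fin b × Fin b,
    Nat.card {j : Fin n // x j ∈ gridSquare b ij ∧ y (σ j) ∈ gridSquare b ij} =
      min (Nat.card {j : Fin n // x j ∈ gridSquare b ij})
        (Nat.card {j : Fin n // y j ∈ gridSquare b ij})

/-! By Kantorovich duality, the least cost of matching two sets of `k` points of a convex body is
`∑ f (x j) - ∑ f (y j)` for some `1`-Lipschitz potential `f`. Replace `f x` by the mean of `f` over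
the dilation, by the factor `ε`, of the body about `x`; this costs at most `diam * ε` per point. The
difference to the global mean of `f` is an integral of `∇f` against a fixed vector field depending
on `x`, and `‖∇f‖ ≤ 1`. The matching cost is therefore bounded, up to `2 * diam * ε * k`, by the
`L¹` fluctuations of two sums of independent copies of this field, whose variance in dimension two
is of order `k * log (1 / ε)`.

Conditionally on the cells containing them, the points are independent and uniform in their cells.
Matching inside the cells then costs `1 / b` times a matching in the unit square, and by the
Cauchy–Schwarz inequality the sum over the `b ^ 2` cells is of order `√(n * log n)`. The points left
over number `½ ∑ |Nᵢ - Nᵢ'|`, where `Nᵢ` and `Nᵢ'` are binomial; each costs at most `√2`, and the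
variance of `Nᵢ - Nᵢ'` bounds their total cost by `√(n * (b ^ 2 - 1))`.
-/

section AssignmentDuality

variable {ι κ : Type*}

/-- The `c`-transform `j ↦ min_l (g l + c j l)` of a price vector `g` for the cost matrix `c`. -/
noncomputable def cTransform (c : ι → κ → ℝ) (g : κ → ℝ) (j : ι) : ℝ := ⨅ l, (g l + c j l)

/-- The objective of the linear program dual to the assignment problem with cost matrix `c`. -/
noncomputable def dualValue [Fintype ι] [Fintype κ] (c : ι → κ → ℝ) (g : κ → ℝ) : ℝ :=
  ∑ j, cTransform c g j - ∑ l, g l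

lemma cTransform_le [Finite κ] (c : ι → κ → ℝ) (g : κ → ℝ) (j : ι) (l : κ) :
    cTransform c g j ≤ g l + c j l :=
  ciInf_le (Set.finite_range _).bddBelow l

lemma continuous_cTransform [Finite κ] [Nonempty κ] (c : ι → κ → ℝ) (j : ι) :
    Continuous fun g ↦ cTransform c g j := by
  have := Fintype.ofFinite κ
  simp only [cTransform, ← Finset.inf'_univ_eq_ciInf]
  exact Continuous.finset_inf'_apply Finset.univ_nonempty fun l _ ↦ by fun_prop

lemma cTransform_add_const [Finite κ] [Nonempty κ] (c : ι → κ → ℝ) (g : κ → ℝ) (a : ℝ) (j : ι) :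
    cTransform c (fun l ↦ g l + a) j = cTransform c g j + a := by
  rw [cTransform, cTransform, ciInf_add (Set.finite_range _).bddBelow]
  exact iInf_congr fun l ↦ by ring

variable [Fintype ι] [Fintype κ]

lemma continuous_dualValue [Nonempty κ] (c : ι → κ → ℝ) : Continuous (dualValue c) :=
  (continuous_finsetSum _ fun j _ ↦ continuous_cTransform c j).sub (by fun_prop)

lemma dualValue_add_const [Nonempty κ] (hcard : Fintype.card ι = Fintype.card κ) (c : ι → κ → ℝ)
    (g : κ → ℝ) (a : ℝ) : dualValue c (fun l ↦ g l + a) = dualValue c g := by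
  simp only [dualValue, cTransform_add_const, Finset.sum_add_distrib, Finset.sum_const,
    Finset.card_univ, hcard]
  ring

/-- Truncating prices at the oscillation `R` of `c` above the cheapest one leaves the `c`-transform
unchanged, because a more expensive target is never the best one. -/
lemma dualValue_le_dualValue_min [Nonempty κ] {c : ι → κ → ℝ} {R : ℝ}
    (hR : ∀ j l l', c j l ≤ c j l' + R) {g : κ → ℝ} {l₀ : κ} (hl₀ : g l₀ = 0) :
    dualValue c g ≤ dualValue c fun l ↦ min (g l) R := by
  refine sub_le_sub (Finset.sum_le_sum fun j _ ↦ le_ciInf fun l ↦ ?_)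
    (Finset.sum_le_sum fun l _ ↦ min_le_left _ _)
  rcases min_choice (g l) R with h | h <;> simp only [h]
  · exact cTransform_le c g j l
  · linarith [cTransform_le c g j l₀, hR j l₀ l]

lemma exists_forall_dualValue_le [Nonempty κ] (hcard : Fintype.card ι = Fintype.card κ)
    (c : ι → κ → ℝ) : ∃ g, ∀ g', dualValue c g' ≤ dualValue c g := by
  obtain ⟨M, hM⟩ := (Set.finite_range fun p : ι × κ ↦ |c p.1 p.2|).bddAbove
  replace hM j l : |c j l| ≤ |M| := (hM ⟨(j, l), rfl⟩).trans (le_abs_self M)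
  have hR j l l' : c j l ≤ c j l' + 2 * |M| := by
    linarith [abs_le.1 (hM j l), abs_le.1 (hM j l')]
  obtain ⟨g, -, hg⟩ := (isCompact_Icc (a := (0 : κ → ℝ)) (b := fun _ ↦ 2 * |M|)).exists_isMaxOn
    ⟨0, le_rfl, fun _ ↦ by positivity⟩ (continuous_dualValue c).continuousOn
  refine ⟨g, fun g' ↦ ?_⟩
  obtain ⟨l₀, hl₀⟩ := Finite.exists_min g'
  calc dualValue c g' = dualValue c fun l ↦ g' l + -g' l₀ := (dualValue_add_const hcard c g' _).symm
    _ ≤ dualValue c fun l ↦ min (g' l + -g' l₀) (2 * |M|) :=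
      dualValue_le_dualValue_min (l₀ := l₀) hR (add_neg_cancel _)
    _ ≤ dualValue c g :=
      hg ⟨fun l ↦ le_min (by linarith [hl₀ l] : 0 ≤ g' l + -g' l₀) (by positivity),
        fun l ↦ min_le_right _ _⟩

/-- If Hall's condition failed on `s`, raising the prices of all targets that are optimal for `s`
would increase the dual value. -/
lemma card_le_card_biUnion_tight [DecidableEq κ] [Nonempty κ] {c : ι → κ → ℝ} {g : κ → ℝ}
    (hg : ∀ g', dualValue c g' ≤ dualValue c g) (s : Finset ι) :
    s.card ≤ (s.biUnion fun j ↦ {l | g l + c j l = cTransform c g j}).card := by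
  classical
  set N := s.biUnion fun j ↦ {l | g l + c j l = cTransform c g j}
  obtain ⟨δ, hδ, hδ0⟩ : ∃ δ : ℝ, (∀ j l, g l + c j l ≠ cTransform c g j →
      cTransform c g j + δ ≤ g l + c j l) ∧ 0 < δ := by
    refine ((Filter.eventually_all.2 fun j ↦ Filter.eventually_all.2 fun l ↦
      Filter.eventually_imp_distrib_left.2 fun hne ↦ ?_).and
      (self_mem_nhdsWithin (s := Set.Ioi (0 : ℝ)))).exists (f := nhdsWithin 0 (Set.Ioi 0))
    have hlt : (0 : ℝ) < g l + c j l - cTransform c g j :=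
      sub_pos.2 ((cTransform_le c g j l).lt_of_ne' hne)
    filter_upwards [nhdsWithin_le_nhds (eventually_lt_nhds hlt)] with δ h
    linarith
  have hraise j : cTransform c g j + (if j ∈ s then δ else 0) ≤
      cTransform c (fun l ↦ g l + if l ∈ N then δ else 0) j := by
    refine le_ciInf fun l ↦ ?_
    have hle := cTransform_le c g j l
    by_cases hj : j ∈ s <;> by_cases hl : l ∈ N <;> simp only [hj, hl, if_true, if_false]
    · linarith
    · have : g l + c j l ≠ cTransform c g j := fun h ↦
        hl (Finset.mem_biUnion.2 ⟨j, hj, by simpa using h⟩)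
      linarith [hδ j l this]
    all_goals linarith
  have hsum := Finset.sum_le_sum fun j (_ : j ∈ Finset.univ) ↦ hraise j
  have hmax := hg fun l ↦ g l + if l ∈ N then δ else 0
  simp only [dualValue, Finset.sum_add_distrib, Finset.sum_ite_mem, Finset.univ_inter,
    Finset.sum_const, nsmul_eq_mul] at hsum hmax
  have : (s.card : ℝ) * δ ≤ N.card * δ := by linarith
  exact_mod_cast le_of_mul_le_mul_right this hδ0

theorem exists_equiv_forall_price_add_cost_le (hcard : Fintype.card ι = Fintype.card κ)
    (c : ι → κ → ℝ) :
    ∃ g : κ → ℝ, ∃ σ : ι ≃ κ, ∀ j l, g (σ j) + c j (σ j) ≤ g l + c j l := by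
  classical
  rcases isEmpty_or_nonempty κ with hκ | hκ
  · exact ⟨0, Fintype.equivOfCardEq hcard, fun _ l ↦ isEmptyElim l⟩
  obtain ⟨g, hg⟩ := exists_forall_dualValue_le hcard c
  obtain ⟨f, hf, htight⟩ := (Finset.all_card_le_biUnion_card_iff_exists_injective _).1
    (card_le_card_biUnion_tight hg)
  refine ⟨g, Equiv.ofBijective f ((Fintype.bijective_iff_injective_and_card f).2 ⟨hf, hcard⟩),
    fun j l ↦ ?_⟩
  have hfj : g (f j) + c j (f j) = cTransform c g j := by simpa using htight j
  exact hfj.trans_le (cTransform_le c g j l)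

theorem exists_equiv_sum_dist_le_lipschitz {X : Type*} [PseudoMetricSpace X]
    (hcard : Fintype.card ι = Fintype.card κ) (w : ι → X) (v : κ → X) :
    ∃ σ : ι ≃ κ, ∃ f : X → ℝ, LipschitzWith 1 f ∧
      ∑ j, dist (w j) (v (σ j)) ≤ ∑ j, f (w j) - ∑ l, f (v l) := by
  rcases isEmpty_or_nonempty κ with hκ | hκ
  · have := Fintype.card_eq_zero_iff.1 (hcard.trans Fintype.card_eq_zero)
    exact ⟨Fintype.equivOfCardEq hcard, fun _ ↦ 0, LipschitzWith.const' 0, by simp⟩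
  obtain ⟨g, σ, hσ⟩ := exists_equiv_forall_price_add_cost_le hcard fun j l ↦ dist (w j) (v l)
  set f : X → ℝ := cTransform (fun x l ↦ dist x (v l)) g
  have hfle x l : f x ≤ g l + dist x (v l) := cTransform_le _ g x l
  refine ⟨σ, f, LipschitzWith.of_le_add fun x y ↦ ?_, ?_⟩
  · suffices f x - dist x y ≤ f y by linarith
    exact le_ciInf fun l ↦ by linarith [hfle x l, dist_triangle x y (v l)]
  · rw [← Equiv.sum_comp σ fun l ↦ f (v l), ← Finset.sum_sub_distrib]
    refine Finset.sum_le_sum fun j _ ↦ ?_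
    have hlow : g (σ j) + dist (w j) (v (σ j)) ≤ f (w j) := le_ciInf (hσ j)
    have hup := hfle (v (σ j)) (σ j)
    rw [dist_self] at hup
    linarith

end AssignmentDuality

section Smoothing

variable {E : Type*} [NormedAddCommGroup E] [NormedSpace ℝ E] [FiniteDimensional ℝ E]

lemma lipschitzWith_normed_bump_convolution [MeasurableSpace E] [BorelSpace E] (μ : Measure E)
    [μ.IsAddHaarMeasure] (φ : ContDiffBump (0 : E)) {K : NNReal} {f : E → ℝ}
    (hf : LipschitzWith K f) :
    LipschitzWith K (convolution (φ.normed μ) f (ContinuousLinearMap.lsmul ℝ ℝ) μ) := by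
  have hint x : Integrable (fun t ↦ φ.normed μ t * f (x - t)) μ :=
    (φ.continuous_normed.mul (hf.continuous.comp (by fun_prop))).integrable_of_hasCompactSupport
      (φ.hasCompactSupport_normed (μ := μ)).mul_right
  refine LipschitzWith.of_le_add_mul K fun x y ↦ ?_
  simp only [convolution, ContinuousLinearMap.lsmul_apply, smul_eq_mul]
  calc ∫ t, φ.normed μ t * f (x - t) ∂μ
      ≤ ∫ t, (φ.normed μ t * f (y - t) + φ.normed μ t * (K * dist x y)) ∂μ := by
        refine integral_mono (hint x) ((hint y).add (φ.integrable_normed.mul_const _)) fun t ↦ ?_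
        simp only [← mul_add]
        refine mul_le_mul_of_nonneg_left ?_ (φ.nonneg_normed t)
        simpa using hf.le_add_mul (x - t) (y - t)
    _ = _ := by
        rw [integral_add (hint y) (φ.integrable_normed.mul_const _), integral_mul_const,
          φ.integral_normed, one_mul]

theorem exists_contDiff_lipschitzWith_approx {K : NNReal} {f : E → ℝ} (hf : LipschitzWith K f)
    {δ : ℝ} (hδ : 0 < δ) :
    ∃ g : E → ℝ, ContDiff ℝ 1 g ∧ LipschitzWith K g ∧ ∀ x, |g x - f x| ≤ δ := by
  borelize E
  let μ : Measure E := Measure.addHaar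
  have hr : 0 < δ / (K + 1) := by positivity
  let φ : ContDiffBump (0 : E) := ⟨δ / (K + 1) / 2, δ / (K + 1), by positivity, by linarith⟩
  refine ⟨convolution (φ.normed μ) f (ContinuousLinearMap.lsmul ℝ ℝ) μ, ?_,
    lipschitzWith_normed_bump_convolution μ φ hf, fun x ↦ ?_⟩
  · exact_mod_cast HasCompactSupport.contDiff_convolution_left (n := 1) _
      (φ.hasCompactSupport_normed (μ := μ)) φ.contDiff_normed hf.continuous.locallyIntegrable
  · refine ContDiffBump.dist_normed_convolution_le hf.continuous.aestronglyMeasurable fun y hy ↦ ?_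
    calc dist (f y) (f x) ≤ K * dist y x := hf.dist_le_mul y x
      _ ≤ K * (δ / (K + 1)) := by gcongr; exact (Metric.mem_ball.1 hy).le
      _ ≤ δ := by rw [← mul_div_assoc, div_le_iff₀ (by positivity)]; nlinarith

end Smoothing

lemma integral_Ioi_inv_pow_succ {ρ : ℝ} (hρ : 0 < ρ) {d : ℕ} (hd : d ≠ 0) :
    ∫ s in Set.Ioi ρ, (s ^ (d + 1))⁻¹ = (ρ ^ d)⁻¹ / d := by
  have hd' : -((d : ℝ) + 1) < -1 := by
    have : (0 : ℝ) < d := by positivity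
    linarith
  have hpow {s : ℝ} (hs : s ∈ Set.Ioi ρ) : (s ^ (d + 1))⁻¹ = s ^ (-((d : ℝ) + 1)) := by
    rw [Real.rpow_neg (hρ.trans hs).le]
    exact_mod_cast rfl
  rw [setIntegral_congr_fun measurableSet_Ioi fun _ ↦ hpow, integral_Ioi_rpow_of_lt hd' hρ,
    neg_add, neg_add_cancel_right, Real.rpow_neg hρ.le, Real.rpow_natCast, neg_div_neg_eq]

section DilationKernel

variable {E : Type*} [NormedAddCommGroup E] [NormedSpace ℝ E]

/-- The weight `s⁻⁽ᵈ⁺¹⁾` of the scale `s` at the points `z` of the dilation of `K` about `x` by the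
factor `s`, where `d` is the dimension of the ambient space. -/
noncomputable def dilationDensity (K : Set E) (s : ℝ) (z x : E) : ℝ :=
  (s ^ (Module.finrank ℝ E + 1))⁻¹ * K.indicator 1 (x + s⁻¹ • (z - x))

/-- The kernel representing the difference between the mean of a function over `K` and its mean
over the dilation of `K` about `x` by the factor `ε`: see `integral_dilation_sub_integral`. -/
noncomputable def dilationKernel (K : Set E) (ε : ℝ) (z x : E) : ℝ :=
  ∫ s in Set.Ioc ε 1, dilationDensity K s z x

/-- The vector field `x - z` weighted by the dilation kernel; it is paired with the gradient at `z`
of the function to be represented at `x`. -/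
noncomputable def dilationField (K : Set E) (ε : ℝ) (z x : E) : E :=
  dilationKernel K ε z x • (x - z)

variable {K : Set E} {ε s : ℝ} {x z : E}

lemma dilationDensity_nonneg (hs : 0 ≤ s) : 0 ≤ dilationDensity K s z x :=
  mul_nonneg (by positivity) (Set.indicator_nonneg (fun _ _ ↦ zero_le_one) _)

lemma dilationDensity_le (hs : 0 ≤ s) :
    dilationDensity K s z x ≤ (s ^ (Module.finrank ℝ E + 1))⁻¹ :=
  mul_le_of_le_one_right (by positivity) (Set.indicator_le_self' (fun _ _ ↦ zero_le_one) _)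

lemma dilationDensity_le_of_mem_Ioc (hε : 0 < ε) (hs : s ∈ Set.Ioc ε 1) :
    dilationDensity K s z x ≤ (ε ^ (Module.finrank ℝ E + 1))⁻¹ := by
  refine (dilationDensity_le (hε.trans hs.1).le).trans ?_
  gcongr
  exact hs.1.le

lemma dilationDensity_eq_zero_of_notMem (hK : StarConvex ℝ x K) (hs : s ∈ Set.Ioc 0 1)
    (hz : z ∉ K) : dilationDensity K s z x = 0 := by
  refine mul_eq_zero_of_right _ (Set.indicator_of_notMem (fun h ↦ hz ?_) _)
  simpa [hs.1.ne', add_sub_cancel] using hK.add_smul_sub_mem h hs.1.le hs.2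

lemma norm_sub_le_mul_diam (hK : Bornology.IsBounded K) (hx : x ∈ K) (hs : 0 < s)
    (h : dilationDensity K s z x ≠ 0) : ‖x - z‖ ≤ s * Metric.diam K := by
  have hmem : x + s⁻¹ • (z - x) ∈ K := Set.mem_of_indicator_ne_zero (right_ne_zero_of_mul h)
  have hdist := Metric.dist_le_diam_of_mem hK hx hmem
  rw [dist_self_add_right, norm_smul, norm_inv, Real.norm_of_nonneg hs.le, norm_sub_rev] at hdist
  exact (inv_mul_le_iff₀ hs).1 hdist

lemma dilationKernel_nonneg (hε : 0 < ε) : 0 ≤ dilationKernel K ε z x :=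
  setIntegral_nonneg measurableSet_Ioc fun _ hs ↦ dilationDensity_nonneg (hε.trans hs.1).le

lemma norm_dilationField (hε : 0 < ε) :
    ‖dilationField K ε z x‖ = dilationKernel K ε z x * ‖x - z‖ := by
  rw [dilationField, norm_smul, Real.norm_of_nonneg (dilationKernel_nonneg hε)]

lemma norm_pow_mul_dilationKernel_le (hd : Module.finrank ℝ E ≠ 0) (hK : Bornology.IsBounded K)
    (hε : 0 < ε) (hx : x ∈ K) (hz : z ∈ K) :
    ‖x - z‖ ^ Module.finrank ℝ E * dilationKernel K ε z x ≤
      Metric.diam K ^ Module.finrank ℝ E / Module.finrank ℝ E := by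
  set d := Module.finrank ℝ E
  rcases eq_or_ne x z with rfl | hxz
  · rw [sub_self, norm_zero, zero_pow hd, zero_mul]
    positivity
  have hnorm : 0 < ‖x - z‖ := norm_sub_pos_iff.2 hxz
  have hD : 0 < Metric.diam K :=
    hnorm.trans_le (dist_eq_norm x z ▸ Metric.dist_le_diam_of_mem hK hx hz)
  set ρ := ‖x - z‖ / Metric.diam K
  have hρ : 0 < ρ := by positivity
  have hval := integral_Ioi_inv_pow_succ hρ hd
  have hkernel : dilationKernel K ε z x ≤ (ρ ^ d)⁻¹ / d := by
    rw [dilationKernel, ← integral_indicator measurableSet_Ioc, ← hval,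
      ← integral_Ici_eq_integral_Ioi, ← integral_indicator measurableSet_Ici]
    refine integral_mono_of_nonneg (ae_of_all _ (Set.indicator_nonneg fun s hs ↦
      dilationDensity_nonneg (hε.trans hs.1).le)) ?_ (ae_of_all _
        (Set.indicator_le' (fun s hs ↦ ?_)
          fun s _ ↦ Set.indicator_nonneg (fun s hs ↦
            inv_nonneg.2 (pow_nonneg (hρ.le.trans hs) _)) s))
    · rw [integrable_indicator_iff measurableSet_Ici, integrableOn_Ici_iff_integrableOn_Ioi]
      exact .of_integral_ne_zero (hval ▸ by positivity)
    · have hs0 : 0 < s := hε.trans hs.1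
      by_cases h : dilationDensity K s z x = 0
      · exact h ▸ Set.indicator_apply_nonneg fun _ ↦ by positivity
      · have hρs : s ∈ Set.Ici ρ := (div_le_iff₀ hD).2 (norm_sub_le_mul_diam hK hx hs0 h)
        rw [Set.indicator_of_mem hρs]
        exact dilationDensity_le hs0.le
  calc ‖x - z‖ ^ d * dilationKernel K ε z x ≤ ‖x - z‖ ^ d * ((ρ ^ d)⁻¹ / d) := by gcongr
    _ = Metric.diam K ^ d / d := by
      rw [div_pow]
      field_simp

lemma norm_dilationField_sq_le (hd : Module.finrank ℝ E = 2)
    (hK : Bornology.IsBounded K) (hε : 0 < ε) (hx : x ∈ K) (hz : z ∈ K) :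
    ‖dilationField K ε z x‖ ^ 2 ≤ Metric.diam K ^ 2 / 2 * dilationKernel K ε z x := by
  have hbound := norm_pow_mul_dilationKernel_le (hd ▸ two_ne_zero) hK hε hx hz
  rw [hd] at hbound
  calc ‖dilationField K ε z x‖ ^ 2
      = ‖x - z‖ ^ 2 * dilationKernel K ε z x * dilationKernel K ε z x := by
        rw [norm_dilationField hε]
        ring
    _ ≤ _ := mul_le_mul_of_nonneg_right (mod_cast hbound) (dilationKernel_nonneg hε)

lemma norm_fderiv_sub_le_diam {f : E → ℝ} (hL : LipschitzWith 1 f)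
    (hK : Bornology.IsBounded K) (hx : x ∈ K) (hz : z ∈ K) :
    ‖fderiv ℝ f z (x - z)‖ ≤ Metric.diam K := by
  have hfderiv : ‖fderiv ℝ f z‖ ≤ 1 := by simpa using norm_fderiv_le_of_lipschitz ℝ hL
  refine ((fderiv ℝ f z).le_of_opNorm_le hfderiv _).trans ?_
  rw [one_mul, ← dist_eq_norm]
  exact Metric.dist_le_diam_of_mem hK hx hz

lemma comp_dilation_sub_comp {f : E → ℝ} (hf : ContDiff ℝ 1 f) (hε1 : ε ≤ 1) (x y : E) :
    f (x + ε • (y - x)) - f y =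
      ∫ s in Set.Ioc ε 1, fderiv ℝ f (x + s • (y - x)) (x - y) := by
  have hderiv s : HasDerivAt (fun s : ℝ ↦ f (x + s • (y - x)))
      (fderiv ℝ f (x + s • (y - x)) (y - x)) s := by
    refine (hf.differentiable one_ne_zero _).hasFDerivAt.comp_hasDerivAt s ?_
    simpa using ((hasDerivAt_id s).smul_const (y - x)).const_add x
  have hcont : Continuous fun s : ℝ ↦ fderiv ℝ f (x + s • (y - x)) (y - x) :=
    ((hf.continuous_fderiv one_ne_zero).comp (by fun_prop)).clm_apply continuous_const
  have hftc := intervalIntegral.integral_eq_sub_of_hasDerivAt (fun s _ ↦ hderiv s)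
    (hcont.intervalIntegrable ε 1)
  rw [intervalIntegral.integral_of_le hε1, one_smul, add_sub_cancel] at hftc
  simp only [← neg_sub y x, map_neg, integral_neg, hftc]
  rw [neg_sub]

variable [MeasurableSpace E] [BorelSpace E] {μ : Measure E}

lemma abs_integral_dilation_sub_le [IsFiniteMeasureOnCompacts μ]
    [IsProbabilityMeasure (μ.restrict K)] (hK : IsCompact K) (hx : x ∈ K) (hε : 0 ≤ ε)
    {f : E → ℝ} (hL : LipschitzWith 1 f) :
    |∫ y in K, f (x + ε • (y - x)) ∂μ - f x| ≤ Metric.diam K * ε := by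
  have hint : IntegrableOn (fun y ↦ f (x + ε • (y - x))) K μ :=
    (hL.continuous.comp (by fun_prop)).continuousOn.integrableOn_compact hK
  have hconst : ∫ _ in K, f x ∂μ = f x := by simp
  rw [← hconst, ← integral_sub hint (integrable_const _)]
  suffices ∀ᵐ y ∂μ.restrict K, ‖f (x + ε • (y - x)) - f x‖ ≤ Metric.diam K * ε by
    simpa using norm_integral_le_of_norm_le_const this
  filter_upwards [ae_restrict_mem hK.measurableSet] with y hy
  calc ‖f (x + ε • (y - x)) - f x‖ ≤ ‖ε • (y - x)‖ := by
        simpa only [NNReal.coe_one, one_mul, dist_eq_norm, add_sub_cancel_left] using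
          hL.dist_le_mul (x + ε • (y - x)) x
    _ ≤ Metric.diam K * ε := by
        rw [norm_smul, Real.norm_of_nonneg hε, mul_comm, ← dist_eq_norm]
        gcongr
        exact Metric.dist_le_diam_of_mem hK.isBounded hy hx

variable [FiniteDimensional ℝ E]

lemma measurable_dilationDensity (hK : MeasurableSet K) :
    Measurable fun p : ℝ × E × E ↦ dilationDensity K p.1 p.2.1 p.2.2 :=
  .mul (by fun_prop) ((measurable_one.indicator hK).comp (by fun_prop))

lemma measurable_dilationKernel (hK : MeasurableSet K) (ε : ℝ) :
    Measurable fun p : E × E ↦ dilationKernel K ε p.1 p.2 :=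
  (measurable_dilationDensity hK).stronglyMeasurable.integral_prod_left'.measurable

lemma measurable_dilationField (hK : MeasurableSet K) (ε : ℝ) :
    Measurable fun p : E × E ↦ dilationField K ε p.1 p.2 :=
  (measurable_dilationKernel hK ε).smul (by fun_prop)

lemma integrableOn_dilationDensity (hK : MeasurableSet K) (hε : 0 < ε) (z x : E) :
    IntegrableOn (fun s ↦ dilationDensity K s z x) (Set.Ioc ε 1) := by
  refine Integrable.of_bound ((measurable_dilationDensity hK).comp
    (measurable_prodMk_right (y := (z, x)))).aestronglyMeasurable
    (ε ^ (Module.finrank ℝ E + 1))⁻¹ ?_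
  filter_upwards [ae_restrict_mem measurableSet_Ioc] with s hs
  rw [Real.norm_of_nonneg (dilationDensity_nonneg (hε.trans hs.1).le)]
  exact dilationDensity_le_of_mem_Ioc hε hs

lemma dilationKernel_le (hK : MeasurableSet K) (hε : 0 < ε) :
    dilationKernel K ε z x ≤ (ε ^ (Module.finrank ℝ E + 1))⁻¹ :=
  calc dilationKernel K ε z x ≤ ∫ _ in Set.Ioc ε 1, (ε ^ (Module.finrank ℝ E + 1))⁻¹ :=
        setIntegral_mono_on (integrableOn_dilationDensity hK hε z x) (by simp) measurableSet_Ioc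
          fun s hs ↦ dilationDensity_le_of_mem_Ioc hε hs
    _ ≤ _ := by
      simp only [setIntegral_const, Real.volume_real_Ioc, smul_eq_mul]
      exact mul_le_of_le_one_left (by positivity) (by simp [hε.le])

lemma norm_dilationField_le (hK : IsCompact K) (hε : 0 < ε) (hz : z ∈ K) (hx : x ∈ K) :
    ‖dilationField K ε z x‖ ≤ (ε ^ (Module.finrank ℝ E + 1))⁻¹ * Metric.diam K := by
  rw [norm_dilationField hε, ← dist_eq_norm]
  have := Metric.dist_le_diam_of_mem hK.isBounded hx hz
  have := dilationKernel_le (z := z) (x := x) hK.measurableSet hε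
  gcongr

lemma integrable_dilationKernel [IsFiniteMeasure μ] (hK : MeasurableSet K) (hε : 0 < ε) (x : E) :
    Integrable (fun z ↦ dilationKernel K ε z x) μ :=
  .of_bound ((measurable_dilationKernel hK ε).comp measurable_prodMk_right).aestronglyMeasurable
    (ε ^ (Module.finrank ℝ E + 1))⁻¹ <| ae_of_all _ fun z ↦ by
      rw [Real.norm_of_nonneg (dilationKernel_nonneg hε)]
      exact dilationKernel_le hK hε

lemma integrableOn_dilationField [IsFiniteMeasureOnCompacts μ] (hK : IsCompact K) (hε : 0 < ε)
    (hx : x ∈ K) : IntegrableOn (fun z ↦ dilationField K ε z x) K μ := by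
  refine .of_bound hK.measure_lt_top ((measurable_dilationField hK.measurableSet ε).comp
    measurable_prodMk_right).aestronglyMeasurable
    ((ε ^ (Module.finrank ℝ E + 1))⁻¹ * Metric.diam K) ?_
  filter_upwards [ae_restrict_mem hK.measurableSet] with z hz
  exact norm_dilationField_le hK hε hz hx

lemma integral_comp_homothety {F : Type*} [NormedAddCommGroup F] [NormedSpace ℝ F]
    [μ.IsAddHaarMeasure] (H : E → F) (x : E) (r : ℝ) :
    ∫ z, H (x + r • (z - x)) ∂μ = |(r ^ Module.finrank ℝ E)⁻¹| • ∫ y, H y ∂μ := by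
  rw [integral_sub_right_eq_self (fun u ↦ H (x + r • u)) x,
    Measure.integral_comp_smul μ (fun u ↦ H (x + u)) r, integral_add_left_eq_self H x]

lemma integral_dilationDensity [μ.IsAddHaarMeasure] (hK : MeasurableSet K) (hs : 0 < s) (x : E) :
    ∫ z, dilationDensity K s z x ∂μ = s⁻¹ * μ.real K := by
  simp only [dilationDensity]
  rw [integral_const_mul, integral_comp_homothety (K.indicator (1 : E → ℝ)) x s⁻¹,
    integral_indicator_one hK, inv_pow, inv_inv, abs_of_pos (by positivity), smul_eq_mul,
    ← mul_assoc, pow_succ]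
  field_simp

lemma integrable_dilationDensity [μ.IsAddHaarMeasure] (hK : IsCompact K) (hs : 0 < s) (x : E) :
    Integrable (fun z ↦ dilationDensity K s z x) μ := by
  have hK' : Integrable (K.indicator (1 : E → ℝ)) μ :=
    (integrable_indicator_iff hK.measurableSet).2 (integrableOn_const hK.measure_ne_top)
  have hcomp := ((hK'.comp_add_left x).comp_smul (inv_ne_zero hs.ne')).comp_sub_right x
  exact hcomp.const_mul _

lemma integral_dilationKernel_le [μ.IsAddHaarMeasure] (hK : IsCompact K) (hε : 0 < ε)
    (hε1 : ε ≤ 1) (x : E) :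
    ∫ z in K, dilationKernel K ε z x ∂μ ≤ -Real.log ε * μ.real K := by
  have : IsFiniteMeasure (μ.restrict K) := ⟨by simpa using hK.measure_lt_top⟩
  simp only [dilationKernel]
  rw [integral_integral_swap]
  · calc ∫ s in Set.Ioc ε 1, ∫ z in K, dilationDensity K s z x ∂μ
        ≤ ∫ s in Set.Ioc ε 1, s⁻¹ * μ.real K := by
          refine integral_mono_of_nonneg ?_ ?_ ?_
          · filter_upwards [ae_restrict_mem measurableSet_Ioc] with s hs
            exact integral_nonneg fun z ↦ dilationDensity_nonneg (hε.trans hs.1).le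
          · exact (((continuousOn_inv₀.mono fun s hs ↦ (hε.trans_le hs.1).ne').integrableOn_Icc
              ).mono_set Set.Ioc_subset_Icc_self).mul_const _
          · filter_upwards [ae_restrict_mem measurableSet_Ioc] with s hs
            have hs0 : 0 < s := hε.trans hs.1
            rw [← integral_dilationDensity hK.measurableSet hs0 x]
            exact setIntegral_le_integral (integrable_dilationDensity hK hs0 x)
              (ae_of_all _ fun z ↦ dilationDensity_nonneg hs0.le)
      _ = -Real.log ε * μ.real K := by
          rw [integral_mul_const, ← intervalIntegral.integral_of_le hε1,
            integral_inv_of_pos hε one_pos, one_div, Real.log_inv]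
  · refine .of_bound ?_ (ε ^ (Module.finrank ℝ E + 1))⁻¹ ?_
    · exact ((measurable_dilationDensity hK.measurableSet).comp (f := fun p : E × ℝ ↦ (p.2, p.1, x))
        (by fun_prop)).aestronglyMeasurable
    · filter_upwards [Measure.quasiMeasurePreserving_snd.ae
        (ae_restrict_mem measurableSet_Ioc)] with p hp
      rw [Function.uncurry, Real.norm_of_nonneg (dilationDensity_nonneg (hε.trans hp.1).le)]
      exact dilationDensity_le_of_mem_Ioc hε hp

lemma integral_norm_dilationField_sq_le [μ.IsAddHaarMeasure] (hd : Module.finrank ℝ E = 2)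
    (hK : IsCompact K) (hε : 0 < ε) (hε1 : ε ≤ 1) (hx : x ∈ K) :
    ∫ z in K, ‖dilationField K ε z x‖ ^ 2 ∂μ ≤
      Metric.diam K ^ 2 / 2 * (-Real.log ε * μ.real K) := by
  have : IsFiniteMeasure (μ.restrict K) := ⟨by simpa using hK.measure_lt_top⟩
  calc ∫ z in K, ‖dilationField K ε z x‖ ^ 2 ∂μ
      ≤ ∫ z in K, Metric.diam K ^ 2 / 2 * dilationKernel K ε z x ∂μ := by
        refine integral_mono_of_nonneg (ae_of_all _ fun z ↦ sq_nonneg _)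
          ((integrable_dilationKernel hK.measurableSet hε x).const_mul _) ?_
        filter_upwards [ae_restrict_mem hK.measurableSet] with z hz
        exact norm_dilationField_sq_le hd hK.isBounded hε hx hz
    _ ≤ _ := by
      rw [integral_const_mul]
      gcongr
      exact integral_dilationKernel_le hK hε hε1 x

lemma integral_fderiv_dilation [μ.IsAddHaarMeasure] (hK : MeasurableSet K)
    (hKx : StarConvex ℝ x K) (hs : s ∈ Set.Ioc 0 1) (f : E → ℝ) :
    ∫ y in K, fderiv ℝ f (x + s • (y - x)) (x - y) ∂μ =
      ∫ z in K, dilationDensity K s z x * fderiv ℝ f z (x - z) ∂μ := by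
  set H : E → ℝ := K.indicator fun y ↦ fderiv ℝ f (x + s • (y - x)) (x - y) with hH
  have hcomp z : dilationDensity K s z x * fderiv ℝ f z (x - z) =
      (s ^ Module.finrank ℝ E)⁻¹ * H (x + s⁻¹ • (z - x)) := by
    have hz : x + s • s⁻¹ • (z - x) = z := by simp [hs.1.ne']
    have hx : x - (x + s⁻¹ • (z - x)) = s⁻¹ • (x - z) := by
      rw [sub_add_cancel_left, ← smul_neg, neg_sub]
    by_cases h : x + s⁻¹ • (z - x) ∈ K
    · rw [hH, Set.indicator_of_mem h, dilationDensity, Set.indicator_of_mem h,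
        add_sub_cancel_left, hz, hx, map_smul, pow_succ, mul_inv, smul_eq_mul, Pi.one_apply]
      ring
    · rw [hH, Set.indicator_of_notMem h, dilationDensity, Set.indicator_of_notMem h]
      ring
  have hsupp : ∀ z ∉ K, dilationDensity K s z x * fderiv ℝ f z (x - z) = 0 := fun z hz ↦ by
    rw [dilationDensity_eq_zero_of_notMem hKx hs hz, zero_mul]
  rw [setIntegral_eq_integral_of_forall_compl_eq_zero hsupp]
  simp only [hcomp]
  rw [integral_const_mul, integral_comp_homothety H x s⁻¹, ← integral_indicator hK, inv_pow,
    inv_inv, abs_of_pos (pow_pos hs.1 _), smul_eq_mul, inv_mul_cancel_left₀ (pow_pos hs.1 _).ne']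

lemma integrable_dilationDensity_mul_fderiv [IsFiniteMeasureOnCompacts μ] (hK : IsCompact K)
    (hx : x ∈ K) (hε : 0 < ε) {f : E → ℝ} (hf : ContDiff ℝ 1 f) (hL : LipschitzWith 1 f) :
    Integrable (fun p : ℝ × E ↦ dilationDensity K p.1 p.2 x * fderiv ℝ f p.2 (x - p.2))
      ((volume.restrict (Set.Ioc ε 1)).prod (μ.restrict K)) := by
  have : IsFiniteMeasure (μ.restrict K) := ⟨by simpa using hK.measure_lt_top⟩
  have hfderiv : Continuous fun p : ℝ × E ↦ fderiv ℝ f p.2 (x - p.2) :=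
    ((hf.continuous_fderiv one_ne_zero).comp continuous_snd).clm_apply (by fun_prop)
  have hdensity : Measurable fun p : ℝ × E ↦ dilationDensity K p.1 p.2 x :=
    (measurable_dilationDensity hK.measurableSet).comp (f := fun p : ℝ × E ↦ (p.1, p.2, x))
      (by fun_prop)
  refine .of_bound (hdensity.mul hfderiv.measurable).aestronglyMeasurable
    ((ε ^ (Module.finrank ℝ E + 1))⁻¹ * Metric.diam K) ?_
  filter_upwards [Measure.quasiMeasurePreserving_fst.ae (ae_restrict_mem measurableSet_Ioc),
    Measure.quasiMeasurePreserving_snd.ae (ae_restrict_mem hK.measurableSet)] with p hs hz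
  rw [norm_mul, Real.norm_of_nonneg (dilationDensity_nonneg (hε.trans hs.1).le)]
  exact mul_le_mul (dilationDensity_le_of_mem_Ioc hε hs)
    (norm_fderiv_sub_le_diam hL hK.isBounded hx hz) (norm_nonneg _) (by positivity)

theorem integral_dilation_sub_integral [μ.IsAddHaarMeasure] (hK : IsCompact K)
    (hKx : StarConvex ℝ x K) (hx : x ∈ K) (hε : 0 < ε) (hε1 : ε ≤ 1) {f : E → ℝ}
    (hf : ContDiff ℝ 1 f) (hL : LipschitzWith 1 f) :
    ∫ y in K, f (x + ε • (y - x)) ∂μ - ∫ y in K, f y ∂μ =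
      ∫ z in K, fderiv ℝ f z (dilationField K ε z x) ∂μ := by
  have hfderiv : Continuous (fderiv ℝ f) := hf.continuous_fderiv one_ne_zero
  have hint : IntegrableOn (fun y ↦ f (x + ε • (y - x))) K μ :=
    (hf.continuous.comp (by fun_prop)).continuousOn.integrableOn_compact hK
  calc ∫ y in K, f (x + ε • (y - x)) ∂μ - ∫ y in K, f y ∂μ
      = ∫ y in K, (∫ s in Set.Ioc ε 1, fderiv ℝ f (x + s • (y - x)) (x - y)) ∂μ := by
        rw [← integral_sub hint (hf.continuous.continuousOn.integrableOn_compact hK)]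
        simp only [comp_dilation_sub_comp hf hε1]
    _ = ∫ s in Set.Ioc ε 1, ∫ y in K, fderiv ℝ f (x + s • (y - x)) (x - y) ∂μ := by
        refine integral_integral_swap ?_
        rw [Measure.prod_restrict]
        have hcont : Continuous fun p : E × ℝ ↦ fderiv ℝ f (x + p.2 • (p.1 - x)) (x - p.1) :=
          (hfderiv.comp (by fun_prop)).clm_apply (by fun_prop)
        exact (hcont.continuousOn.integrableOn_compact (hK.prod isCompact_Icc)).mono_set
          (Set.prod_mono le_rfl Set.Ioc_subset_Icc_self)
    _ = ∫ s in Set.Ioc ε 1, ∫ z in K, dilationDensity K s z x * fderiv ℝ f z (x - z) ∂μ :=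
        setIntegral_congr_fun measurableSet_Ioc fun s hs ↦
          integral_fderiv_dilation hK.measurableSet hKx ⟨hε.trans hs.1, hs.2⟩ f
    _ = ∫ z in K, (∫ s in Set.Ioc ε 1, dilationDensity K s z x * fderiv ℝ f z (x - z)) ∂μ :=
        integral_integral_swap (integrable_dilationDensity_mul_fderiv hK hx hε hf hL)
    _ = ∫ z in K, fderiv ℝ f z (dilationField K ε z x) ∂μ := by
        simp only [integral_mul_const, dilationField, dilationKernel, map_smul, smul_eq_mul]

lemma abs_sub_integral_sub_integral_fderiv_le [μ.IsAddHaarMeasure]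
    [IsProbabilityMeasure (μ.restrict K)] (hK : IsCompact K) (hKx : StarConvex ℝ x K) (hx : x ∈ K)
    (hε : 0 < ε) (hε1 : ε ≤ 1) {g : E → ℝ} (hg : ContDiff ℝ 1 g) (hL : LipschitzWith 1 g) :
    |g x - ∫ y in K, g y ∂μ - ∫ z in K, fderiv ℝ g z (dilationField K ε z x) ∂μ| ≤
      Metric.diam K * ε := by
  rw [← integral_dilation_sub_integral hK hKx hx hε hε1 hg hL, sub_sub_sub_cancel_right,
    abs_sub_comm]
  exact abs_integral_dilation_sub_le hK hx hε.le hL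

variable {ι κ : Type*} [Fintype ι] [Fintype κ] {w : ι → E} {v : κ → E}

lemma integrable_fderiv_dilationField [IsFiniteMeasureOnCompacts μ] (hK : IsCompact K) (hε : 0 < ε)
    (hx : x ∈ K) {g : E → ℝ} (hg : ContDiff ℝ 1 g) (hL : LipschitzWith 1 g) :
    IntegrableOn (fun z ↦ fderiv ℝ g z (dilationField K ε z x)) K μ := by
  refine (integrableOn_dilationField hK hε hx).norm.mono' ?_ (ae_of_all _ fun z ↦ ?_)
  · simp only [dilationField, map_smul, smul_eq_mul]
    exact (((measurable_dilationKernel hK.measurableSet ε).comp measurable_prodMk_right).mul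
      ((hg.continuous_fderiv one_ne_zero).clm_apply (by fun_prop)).measurable).aestronglyMeasurable
  · simpa using (fderiv ℝ g z).le_of_opNorm_le (norm_fderiv_le_of_lipschitz ℝ hL)
      (dilationField K ε z x)

lemma sum_integral_fderiv_sub_le [IsFiniteMeasureOnCompacts μ] (hK : IsCompact K) (hε : 0 < ε)
    (hw : ∀ j, w j ∈ K) (hv : ∀ l, v l ∈ K) {g : E → ℝ} (hg : ContDiff ℝ 1 g)
    (hL : LipschitzWith 1 g) :
    ∑ j, ∫ z in K, fderiv ℝ g z (dilationField K ε z (w j)) ∂μ -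
        ∑ l, ∫ z in K, fderiv ℝ g z (dilationField K ε z (v l)) ∂μ ≤
      ∫ z in K, ‖∑ j, dilationField K ε z (w j) - ∑ l, dilationField K ε z (v l)‖ ∂μ := by
  have hgw j := integrable_fderiv_dilationField (μ := μ) hK hε (hw j) hg hL
  have hgv l := integrable_fderiv_dilationField (μ := μ) hK hε (hv l) hg hL
  have hFw := integrable_finsetSum Finset.univ fun j _ ↦
    integrableOn_dilationField (μ := μ) hK hε (hw j)
  have hFv := integrable_finsetSum Finset.univ fun l _ ↦
    integrableOn_dilationField (μ := μ) hK hε (hv l)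
  rw [← integral_finsetSum _ fun j _ ↦ hgw j, ← integral_finsetSum _ fun l _ ↦ hgv l,
    ← integral_sub (integrable_finsetSum _ fun j _ ↦ hgw j)
      (integrable_finsetSum _ fun l _ ↦ hgv l)]
  refine integral_mono ((integrable_finsetSum _ fun j _ ↦ hgw j).sub
    (integrable_finsetSum _ fun l _ ↦ hgv l)) (hFw.sub hFv).norm fun z ↦ ?_
  simp only [← map_sum, ← map_sub]
  exact (le_abs_self _).trans (((fderiv ℝ g z).le_of_opNorm_le
    (norm_fderiv_le_of_lipschitz ℝ hL) _).trans_eq (one_mul _))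

theorem exists_equiv_sum_norm_sub_le [μ.IsAddHaarMeasure] [IsProbabilityMeasure (μ.restrict K)]
    (hK : IsCompact K) (hKconv : Convex ℝ K) (hε : 0 < ε) (hε1 : ε ≤ 1)
    (hcard : Fintype.card ι = Fintype.card κ) (hw : ∀ j, w j ∈ K) (hv : ∀ l, v l ∈ K) :
    ∃ σ : ι ≃ κ, ∑ j, ‖w j - v (σ j)‖ ≤ 2 * Metric.diam K * ε * Fintype.card ι +
      ∫ z in K, ‖∑ j, dilationField K ε z (w j) - ∑ l, dilationField K ε z (v l)‖ ∂μ := by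
  obtain ⟨σ, f, hfL, hσ⟩ := exists_equiv_sum_dist_le_lipschitz hcard w v
  refine ⟨σ, le_of_forall_pos_le_add fun δ hδ ↦ ?_⟩
  set η : ℝ := δ / (2 * (Fintype.card ι + 1)) with hη
  obtain ⟨g, hg, hgL, hgf⟩ := exists_contDiff_lipschitzWith_approx hfL
    (show 0 < η by positivity)
  set R : E → ℝ := fun x ↦ ∫ z in K, fderiv ℝ g z (dilationField K ε z x) ∂μ
  set m := ∫ y in K, g y ∂μ
  have hfR {x} (hx : x ∈ K) : |f x - (m + R x)| ≤ Metric.diam K * ε + η := by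
    have hgx : |g x - m - R x| ≤ Metric.diam K * ε :=
      abs_sub_integral_sub_integral_fderiv_le hK (hKconv.starConvex hx) hx hε hε1 hg hgL
    have hfg := hgf x
    rw [abs_le] at *
    constructor <;> linarith
  have hfw : ∑ j, f (w j) ≤ ∑ j, (m + R (w j) + (Metric.diam K * ε + η)) :=
    Finset.sum_le_sum fun j _ ↦ by linarith [(abs_le.1 (hfR (hw j))).2]
  have hfv : ∑ l, (m + R (v l) - (Metric.diam K * ε + η)) ≤ ∑ l, f (v l) :=
    Finset.sum_le_sum fun l _ ↦ by linarith [(abs_le.1 (hfR (hv l))).1]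
  have hR : ∑ j, R (w j) - ∑ l, R (v l) ≤ _ := sum_integral_fderiv_sub_le hK hε hw hv hg hgL
  have hδη : 2 * Fintype.card ι * η ≤ δ := by
    rw [hη, mul_div_assoc', div_le_iff₀ (by positivity)]
    nlinarith
  simp only [Finset.sum_add_distrib, Finset.sum_sub_distrib, Finset.sum_const, Finset.card_univ,
    nsmul_eq_mul, ← hcard, dist_eq_norm] at hfw hfv hσ
  linarith

end DilationKernel

open ProbabilityTheory in
lemma integral_norm_le_sqrt_integral_norm_sq {Ω H : Type*} [MeasurableSpace Ω]
    [NormedAddCommGroup H] {P : Measure Ω} [IsProbabilityMeasure P] {X : Ω → H}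
    (hX : MemLp X 2 P) : ∫ ω, ‖X ω‖ ∂P ≤ √(∫ ω, ‖X ω‖ ^ 2 ∂P) := by
  have hvar := variance_nonneg (fun ω ↦ ‖X ω‖) P
  rw [variance_eq_sub hX.norm] at hvar
  exact Real.le_sqrt_of_sq_le (sub_nonneg.1 hvar)

section Fluctuation

variable {ι Ω α β H : Type*} [MeasurableSpace Ω] [MeasurableSpace α] [MeasurableSpace β]
  [NormedAddCommGroup H]

section NormedSpace

variable [NormedSpace ℝ H]

/-- The `L¹(ν)` norm of the deviation of the sum of the functions `F · (w j)`, `j ∈ s`, from its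
mean when the points `w j` have law `μ`. -/
noncomputable def fluctuation (F : β → α → H) (ν : Measure β) (μ : Measure α) (s : Finset ι)
    (w : ι → α) : ℝ :=
  ∫ z, ‖∑ j ∈ s, (F z (w j) - ∫ x, F z x ∂μ)‖ ∂ν

variable {F : β → α → H} {ν : Measure β} {μ : Measure α} [Fintype ι]
  [SFinite ν] [IsProbabilityMeasure μ]

lemma integrable_sum_sub_integral (hF : Integrable (Function.uncurry F) (ν.prod μ))
    (s : Finset ι) :
    Integrable (fun p : (ι → α) × β ↦ ∑ j ∈ s, (F p.2 (p.1 j) - ∫ x, F p.2 x ∂μ))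
      ((Measure.pi fun _ ↦ μ).prod ν) := by
  refine integrable_finsetSum _ fun j _ ↦ .sub ?_ (hF.integral_prod_left.comp_snd _)
  have hmp : MeasurePreserving (fun p : (ι → α) × β ↦ (p.2, p.1 j))
      ((Measure.pi fun _ ↦ μ).prod ν) (ν.prod μ) :=
    Measure.measurePreserving_swap.comp
      ((measurePreserving_eval (fun _ ↦ μ) j).prod (.id ν))
  exact hmp.integrable_comp_of_integrable hF

lemma integrable_fluctuation (hF : Integrable (Function.uncurry F) (ν.prod μ)) (s : Finset ι) :
    Integrable (fluctuation F ν μ s) (Measure.pi fun _ ↦ μ) :=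
  (integrable_sum_sub_integral hF s).norm.integral_prod_left

end NormedSpace

section InnerProductSpace

variable [InnerProductSpace ℝ H] [FiniteDimensional ℝ H]

open ProbabilityTheory InnerProductSpace in
lemma integral_norm_sum_sub_integral_sq_le [MeasurableSpace H] [BorelSpace H]
    {P : Measure Ω} [IsProbabilityMeasure P] {X : ι → Ω → H} {s : Finset ι}
    (hX : ∀ j ∈ s, MemLp (X j) 2 P)
    (hindep : Set.Pairwise s fun i j ↦ IndepFun (X i) (X j) P) :
    ∫ ω, ‖∑ j ∈ s, (X j ω - ∫ ω, X j ω ∂P)‖ ^ 2 ∂P ≤ ∑ j ∈ s, ∫ ω, ‖X j ω‖ ^ 2 ∂P := by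
  let e := stdOrthonormalBasis ℝ H
  let Y c j ω : ℝ := ⟪e c, X j ω⟫_ℝ
  have hY c {j} (hj : j ∈ s) : MemLp (Y c j) 2 P := (hX j hj).const_inner (e c)
  have hcoord c ω : ⟪e c, ∑ j ∈ s, (X j ω - ∫ ω, X j ω ∂P)⟫_ℝ =
      (∑ j ∈ s, Y c j) ω - ∫ ω, (∑ j ∈ s, Y c j) ω ∂P := by
    simp only [Finset.sum_apply, inner_sum, inner_sub_right, Finset.sum_sub_distrib]
    rw [integral_finsetSum _ fun j hj ↦ (hY c hj).integrable one_le_two]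
    congr 1
    exact Finset.sum_congr rfl fun j hj ↦
      (integral_inner ((hX j hj).integrable one_le_two) _).symm
  have hsum c : MemLp (∑ j ∈ s, Y c j) 2 P := memLp_finsetSum' _ fun j hj ↦ hY c hj
  calc ∫ ω, ‖∑ j ∈ s, (X j ω - ∫ ω, X j ω ∂P)‖ ^ 2 ∂P
      = ∑ c, variance (∑ j ∈ s, Y c j) P := by
        simp only [← e.sum_sq_inner_right, hcoord]
        rw [integral_finsetSum]
        · simp only [variance_eq_integral (hsum _).aemeasurable]
        · exact fun c _ ↦ ((hsum c).sub (memLp_const _)).integrable_sq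
    _ = ∑ c, ∑ j ∈ s, variance (Y c j) P := by
        refine Finset.sum_congr rfl fun c _ ↦ IndepFun.variance_sum (fun j hj ↦ hY c hj) ?_
        have hmeas : Measurable fun v ↦ ⟪e c, v⟫_ℝ := by fun_prop
        exact hindep.imp fun i j hij ↦ hij.comp hmeas hmeas
    _ ≤ ∑ c, ∑ j ∈ s, ∫ ω, Y c j ω ^ 2 ∂P :=
        Finset.sum_le_sum fun c _ ↦ Finset.sum_le_sum fun j hj ↦
          variance_le_expectation_sq (hY c hj).aestronglyMeasurable
    _ = ∑ j ∈ s, ∫ ω, ‖X j ω‖ ^ 2 ∂P := by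
        rw [Finset.sum_comm]
        refine Finset.sum_congr rfl fun j hj ↦ ?_
        rw [← integral_finsetSum _ fun c _ ↦ (hY c hj).integrable_sq]
        simp only [Y, e.sum_sq_inner_right]

variable {F : β → α → H} {ν : Measure β} {μ : Measure α} [Fintype ι]
  [IsProbabilityMeasure ν] [IsProbabilityMeasure μ]

lemma integral_norm_sum_sub_integral_sq_pi_le {f : α → H}
    (hf : MemLp f 2 μ) (s : Finset ι) :
    ∫ w : ι → α, ‖∑ j ∈ s, (f (w j) - ∫ x, f x ∂μ)‖ ^ 2 ∂(Measure.pi fun _ ↦ μ) ≤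
      s.card * ∫ x, ‖f x‖ ^ 2 ∂μ := by
  borelize H
  have hmp (j : ι) := measurePreserving_eval (fun _ : ι ↦ μ) j
  have hmean (j : ι) : ∫ w : ι → α, f (w j) ∂(Measure.pi fun _ ↦ μ) = ∫ x, f x ∂μ :=
    integral_comp_eval hf.aestronglyMeasurable
  have hsq (j : ι) : ∫ w : ι → α, ‖f (w j)‖ ^ 2 ∂(Measure.pi fun _ ↦ μ) = ∫ x, ‖f x‖ ^ 2 ∂μ :=
    integral_comp_eval (μ := fun _ : ι ↦ μ) (f := fun x ↦ ‖f x‖ ^ 2)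
      (hf.aestronglyMeasurable.norm.pow 2)
  have hindep := ProbabilityTheory.iIndepFun_pi (μ := fun _ : ι ↦ μ) (X := fun _ ↦ f)
    fun _ ↦ hf.aestronglyMeasurable.aemeasurable
  have hvar := integral_norm_sum_sub_integral_sq_le (P := Measure.pi fun _ : ι ↦ μ)
    (X := fun j w ↦ f (w j)) (s := s) (fun j _ ↦ hf.comp_measurePreserving (hmp j))
    fun i _ j _ hij ↦ hindep.indepFun hij
  simpa only [hmean, hsq, Finset.sum_const, nsmul_eq_mul] using hvar

lemma integral_fluctuation_le
    (hF : MemLp (Function.uncurry F) 2 (ν.prod μ)) (s : Finset ι) :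
    ∫ w, fluctuation F ν μ s w ∂(Measure.pi fun _ ↦ μ) ≤
      √(s.card * ∫ z, ∫ x, ‖F z x‖ ^ 2 ∂μ ∂ν) := by
  set P : Measure (ι → α) := Measure.pi fun _ ↦ μ
  set V : β → ℝ := fun z ↦ s.card * ∫ x, ‖F z x‖ ^ 2 ∂μ
  have hV0 z : 0 ≤ V z := by positivity
  have hint := (integrable_sum_sub_integral (hF.integrable one_le_two) s).norm
  have hFsq : Integrable (fun p : β × α ↦ ‖F p.1 p.2‖ ^ 2) (ν.prod μ) := hF.norm.integrable_sq
  have hV : Integrable V ν := hFsq.integral_prod_left.const_mul _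
  have hsqrtV : MemLp (fun z ↦ √(V z)) 2 ν := by
    rw [memLp_two_iff_integrable_sq
      (Real.continuous_sqrt.comp_aestronglyMeasurable hV.aestronglyMeasurable)]
    simpa only [Real.sq_sqrt (hV0 _)] using hV
  have hslice : ∀ᵐ z ∂ν, MemLp (F z) 2 μ := by
    filter_upwards [hF.aestronglyMeasurable.prodMk_left, hFsq.prod_right_ae] with z hz hzsq
    exact (memLp_two_iff_integrable_sq_norm hz).2 hzsq
  have hbound : ∀ᵐ z ∂ν,
      ∫ w : ι → α, ‖∑ j ∈ s, (F z (w j) - ∫ x, F z x ∂μ)‖ ∂P ≤ √(V z) := by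
    filter_upwards [hslice] with z hz
    have hsum : MemLp (fun w : ι → α ↦ ∑ j ∈ s, (F z (w j) - ∫ x, F z x ∂μ)) 2 P :=
      memLp_finsetSum _ fun j _ ↦
        (hz.comp_measurePreserving (measurePreserving_eval (fun _ ↦ μ) j)).sub (memLp_const _)
    exact (integral_norm_le_sqrt_integral_norm_sq hsum).trans
      (Real.sqrt_le_sqrt (integral_norm_sum_sub_integral_sq_pi_le hz s))
  calc ∫ w, fluctuation F ν μ s w ∂P
      = ∫ z, ∫ w : ι → α, ‖∑ j ∈ s, (F z (w j) - ∫ x, F z x ∂μ)‖ ∂P ∂ν :=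
        integral_integral_swap hint
    _ ≤ ∫ z, ‖√(V z)‖ ∂ν := by
        refine integral_mono_ae hint.integral_prod_right (hsqrtV.integrable one_le_two).norm ?_
        filter_upwards [hbound] with z hz
        rwa [Real.norm_of_nonneg (Real.sqrt_nonneg _)]
    _ ≤ √(∫ z, ‖√(V z)‖ ^ 2 ∂ν) := integral_norm_le_sqrt_integral_norm_sq hsqrtV
    _ = √(s.card * ∫ z, ∫ x, ‖F z x‖ ^ 2 ∂μ ∂ν) := by
        simp only [Real.norm_eq_abs, sq_abs, Real.sq_sqrt (hV0 _), V, integral_const_mul]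

end InnerProductSpace

end Fluctuation

section ConvexBody

variable {ι E : Type*} [NormedAddCommGroup E] [NormedSpace ℝ E] [FiniteDimensional ℝ E]
  [MeasurableSpace E] [BorelSpace E] {μ : Measure E} {K : Set E} {ε : ℝ}

lemma memLp_dilationField [IsFiniteMeasure (μ.restrict K)] (hK : IsCompact K) (hε : 0 < ε)
    (p : ENNReal) :
    MemLp (Function.uncurry (dilationField K ε)) p ((μ.restrict K).prod (μ.restrict K)) := by
  refine .of_bound (measurable_dilationField hK.measurableSet ε).aestronglyMeasurable
    ((ε ^ (Module.finrank ℝ E + 1))⁻¹ * Metric.diam K) ?_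
  filter_upwards [Measure.quasiMeasurePreserving_fst.ae (ae_restrict_mem hK.measurableSet),
    Measure.quasiMeasurePreserving_snd.ae (ae_restrict_mem hK.measurableSet)] with q hz hx
  exact norm_dilationField_le hK hε hz hx

lemma integrable_sum_dilationField_sub [IsFiniteMeasureOnCompacts μ] (hK : IsCompact K)
    (hε : 0 < ε) {s : Finset ι} {w : ι → E} (hw : ∀ j ∈ s, w j ∈ K) :
    Integrable (fun z ↦ ∑ j ∈ s, (dilationField K ε z (w j) - ∫ x in K, dilationField K ε z x ∂μ))
      (μ.restrict K) := by
  have : IsFiniteMeasure (μ.restrict K) := ⟨by simpa using hK.measure_lt_top⟩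
  exact integrable_finsetSum _ fun j hj ↦ (integrableOn_dilationField hK hε (hw j hj)).sub
    ((memLp_dilationField hK hε 1).integrable le_rfl).integral_prod_left

theorem exists_equiv_sum_norm_sub_le_fluctuation [μ.IsAddHaarMeasure]
    [IsProbabilityMeasure (μ.restrict K)] (hK : IsCompact K) (hKconv : Convex ℝ K) (hε : 0 < ε)
    (hε1 : ε ≤ 1) {A B : Finset ι} (hcard : A.card = B.card) {w v : ι → E}
    (hw : ∀ j ∈ A, w j ∈ K) (hv : ∀ j ∈ B, v j ∈ K) :
    ∃ e : A ≃ B, ∑ a : A, ‖w a - v (e a)‖ ≤ 2 * Metric.diam K * ε * A.card +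
      (fluctuation (dilationField K ε) (μ.restrict K) (μ.restrict K) A w +
        fluctuation (dilationField K ε) (μ.restrict K) (μ.restrict K) B v) := by
  obtain ⟨e, he⟩ := exists_equiv_sum_norm_sub_le (μ := μ) (w := fun a : A ↦ w a)
    (v := fun a : B ↦ v a) hK hKconv hε hε1 (by simpa using hcard)
    (fun a ↦ hw a a.2) fun a ↦ hv a a.2
  refine ⟨e, he.trans ?_⟩
  have hA := (integrable_sum_dilationField_sub (μ := μ) hK hε hw).norm
  have hB := (integrable_sum_dilationField_sub (μ := μ) hK hε hv).norm
  rw [Fintype.card_coe, fluctuation, fluctuation, ← integral_add hA hB]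
  refine add_le_add_right (integral_mono_of_nonneg (ae_of_all _ fun _ ↦ norm_nonneg _) (hA.add hB)
    (ae_of_all _ fun z ↦ ?_)) _
  refine le_trans (le_of_eq ?_) (norm_sub_le _ _)
  simp only [Finset.sum_sub_distrib, Finset.sum_const, hcard, sub_sub_sub_cancel_right]
  rw [Finset.sum_coe_sort A fun j ↦ dilationField K ε z (w j),
    Finset.sum_coe_sort B fun j ↦ dilationField K ε z (v j)]

lemma integral_fluctuation_dilationField_le {E : Type*} [NormedAddCommGroup E]
    [InnerProductSpace ℝ E] [FiniteDimensional ℝ E] [MeasurableSpace E] [BorelSpace E]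
    {μ : Measure E} {K : Set E} [μ.IsAddHaarMeasure] [IsProbabilityMeasure (μ.restrict K)]
    [Fintype ι] (hd : Module.finrank ℝ E = 2) (hK : IsCompact K) (hε : 0 < ε) (hε1 : ε ≤ 1)
    (s : Finset ι) :
    ∫ w, fluctuation (dilationField K ε) (μ.restrict K) (μ.restrict K) s w
        ∂(Measure.pi fun _ ↦ μ.restrict K) ≤
      √(s.card * (Metric.diam K ^ 2 / 2 * -Real.log ε)) := by
  have hF : MemLp (Function.uncurry (dilationField K ε)) 2 ((μ.restrict K).prod (μ.restrict K)) :=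
    memLp_dilationField hK hε 2
  refine (integral_fluctuation_le hF s).trans ?_
  rw [integral_integral_swap hF.norm.integrable_sq]
  gcongr
  have hreal : μ.real K = 1 := by
    rw [← measureReal_restrict_apply_univ, probReal_univ]
  calc ∫ x in K, ∫ z in K, ‖dilationField K ε z x‖ ^ 2 ∂μ ∂μ
      ≤ ∫ _ in K, Metric.diam K ^ 2 / 2 * -Real.log ε ∂μ := by
        refine integral_mono_ae hF.norm.integrable_sq.integral_prod_right (integrable_const _) ?_
        filter_upwards [ae_restrict_mem hK.measurableSet] with x hx
        simpa [hreal] using integral_norm_dilationField_sq_le (μ := μ) hd hK hε hε1 hx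
    _ = _ := by simp

end ConvexBody

lemma sum_sqrt_le_sqrt_card_mul_sum {α : Type*} (s : Finset α) {f : α → ℝ} (hf : ∀ i, 0 ≤ f i) :
    ∑ i ∈ s, √(f i) ≤ √(s.card * ∑ i ∈ s, f i) := by
  simpa using Real.sum_sqrt_mul_sqrt_le s (fun _ ↦ zero_le_one) hf

lemma card_mul_sum_measureReal_mul_one_sub_le {κ : Type*} [Fintype κ] [MeasurableSpace κ]
    [MeasurableSingletonClass κ] (μ : Measure κ) [IsProbabilityMeasure μ] :
    Fintype.card κ * ∑ i, μ.real {i} * (1 - μ.real {i}) ≤ Fintype.card κ - 1 := by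
  have hsum : ∑ i, μ.real {i} = 1 := by
    rw [sum_measureReal_singleton, Finset.coe_univ, probReal_univ]
  have hsq := sq_sum_le_card_mul_sum_sq (s := Finset.univ) (f := fun i ↦ μ.real {i})
  rw [hsum, Finset.card_univ] at hsq
  simp only [mul_sub, mul_one, Finset.sum_sub_distrib, hsum, ← sq]
  linarith

section Occupancy

variable {ι κ : Type*} [Fintype ι] [DecidableEq κ]

/-- The occupancy number of the cell `i`: the number of indices labelled `i`. -/
def occupancy (s : ι → κ) (i : κ) : ℕ :=
  Finset.card {j | s j = i}

lemma cast_occupancy (s : ι → κ) (i : κ) :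
    (occupancy s i : ℝ) = ∑ j, ({i} : Set κ).indicator 1 (s j) := by
  simp [occupancy, Set.indicator_apply]

section Fintype

variable [Fintype κ]

lemma sum_occupancy (s : ι → κ) : ∑ i, occupancy s i = Fintype.card ι :=
  (Finset.card_eq_sum_card_fiberwise fun _ _ ↦ Finset.mem_coe.2 (Finset.mem_univ _)).symm

lemma sum_occupancy_sub_min (s t : ι → κ) :
    ∑ i, ((occupancy s i : ℝ) - min (occupancy s i : ℝ) (occupancy t i)) =
      1 / 2 * ∑ i, |(occupancy s i : ℝ) - occupancy t i| := by
  have hsum : ∑ i, ((occupancy s i : ℝ) - occupancy t i) = 0 := by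
    rw [Finset.sum_sub_distrib, sub_eq_zero]
    exact_mod_cast (sum_occupancy s).trans (sum_occupancy t).symm
  have hmin i : (occupancy s i : ℝ) - min (occupancy s i : ℝ) (occupancy t i) =
      1 / 2 * |(occupancy s i : ℝ) - occupancy t i| +
        1 / 2 * ((occupancy s i : ℝ) - occupancy t i) := by
    rcases le_total (occupancy s i : ℝ) (occupancy t i) with h | h
    · rw [min_eq_left h, abs_of_nonpos (sub_nonpos.2 h)]
      ring
    · rw [min_eq_right h, abs_of_nonneg (sub_nonneg.2 h)]
      ring
  simp only [hmin, Finset.sum_add_distrib, ← Finset.mul_sum, hsum, mul_zero, add_zero]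

lemma sum_min_occupancy_le (s t : ι → κ) :
    ∑ i, min (occupancy s i : ℝ) (occupancy t i) ≤ Fintype.card ι :=
  calc ∑ i, min (occupancy s i : ℝ) (occupancy t i) ≤ ∑ i, (occupancy s i : ℝ) :=
        Finset.sum_le_sum fun _ _ ↦ min_le_left _ _
    _ = Fintype.card ι := mod_cast sum_occupancy s

lemma sum_sqrt_min_occupancy_mul_le (s t : ι → κ) {L : ℝ} (hL : 0 ≤ L) :
    ∑ i, √(min (occupancy s i : ℝ) (occupancy t i) * L) ≤
      √(Fintype.card κ * (Fintype.card ι * L)) := by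
  refine (sum_sqrt_le_sqrt_card_mul_sum _ fun i ↦ by positivity).trans ?_
  rw [← Finset.sum_mul, Finset.card_univ]
  gcongr
  exact sum_min_occupancy_le s t

end Fintype

open ProbabilityTheory

lemma integral_sub_sq_prod {Ω : Type*} [MeasurableSpace Ω] {P : Measure Ω} [IsProbabilityMeasure P]
    {X : Ω → ℝ} (hX : MemLp X 2 P) :
    ∫ p, (X p.1 - X p.2) ^ 2 ∂(P.prod P) = 2 * variance X P := by
  have hmean : ∫ p, (X p.1 - X p.2) ∂(P.prod P) = 0 := by
    have hint := hX.integrable one_le_two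
    rw [integral_sub (hint.comp_fst P) (hint.comp_snd P), integral_fun_fst, integral_fun_snd,
      sub_self]
  have hmeas : AEMeasurable (fun p : Ω × Ω ↦ X p.1 - X p.2) (P.prod P) :=
    hX.aemeasurable.comp_fst.sub hX.aemeasurable.comp_snd
  calc _ = Var[fun p : Ω × Ω ↦ X p.1 - X p.2; P.prod P] :=
        (variance_of_integral_eq_zero hmeas hmean).symm
    _ = variance X P + variance (fun ω ↦ -X ω) P := by
      simp only [sub_eq_add_neg]
      exact variance_add_prod (Y := fun ω ↦ -X ω) hX hX.neg
    _ = _ := by rw [variance_fun_neg, two_mul]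

variable [MeasurableSpace κ] [MeasurableSingletonClass κ] {μ : Measure κ} [IsProbabilityMeasure μ]

lemma variance_occupancy (i : κ) :
    Var[fun s : ι → κ ↦ (occupancy s i : ℝ); Measure.pi fun _ ↦ μ] =
      Fintype.card ι * (μ.real {i} * (1 - μ.real {i})) := by
  have hmem : MemLp (({i} : Set κ).indicator (1 : κ → ℝ)) 2 μ :=
    (memLp_const 1).indicator (.singleton i)
  have hvar : Var[({i} : Set κ).indicator (1 : κ → ℝ); μ] = μ.real {i} * (1 - μ.real {i}) := by
    have hsq : ({i} : Set κ).indicator (1 : κ → ℝ) ^ 2 = ({i} : Set κ).indicator 1 := by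
      ext c
      by_cases hc : c = i <;> simp [hc]
    rw [variance_eq_sub hmem, hsq, integral_indicator_one (.singleton i)]
    ring
  have hsum : (fun s : ι → κ ↦ (occupancy s i : ℝ)) =
      ∑ j, fun s : ι → κ ↦ ({i} : Set κ).indicator 1 (s j) := by
    ext s
    simp only [cast_occupancy, Finset.sum_apply]
  rw [hsum, variance_sum_pi fun _ ↦ hmem]
  simp only [hvar, Finset.sum_const, Finset.card_univ, nsmul_eq_mul]

lemma integral_abs_occupancy_sub_le [Finite κ] (i : κ) :
    ∫ p : (ι → κ) × (ι → κ), |(occupancy p.1 i : ℝ) - occupancy p.2 i|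
        ∂((Measure.pi fun _ ↦ μ).prod (Measure.pi fun _ ↦ μ)) ≤
      √(2 * (Fintype.card ι * (μ.real {i} * (1 - μ.real {i})))) := by
  have hmem : MemLp (fun s : ι → κ ↦ (occupancy s i : ℝ)) 2 (Measure.pi fun _ ↦ μ) :=
    .of_discrete
  rw [← variance_occupancy, ← integral_sub_sq_prod hmem]
  simpa only [Pi.sub_apply, Real.norm_eq_abs, sq_abs] using
    integral_norm_le_sqrt_integral_norm_sq ((hmem.comp_fst _).sub (hmem.comp_snd _))

variable [Fintype κ]

lemma integral_sum_abs_occupancy_sub_le :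
    ∫ p : (ι → κ) × (ι → κ), ∑ i, |(occupancy p.1 i : ℝ) - occupancy p.2 i|
        ∂((Measure.pi fun _ ↦ μ).prod (Measure.pi fun _ ↦ μ)) ≤
      √(2 * Fintype.card ι * (Fintype.card κ - 1)) := by
  have hp (i : κ) : 0 ≤ μ.real {i} * (1 - μ.real {i}) :=
    mul_nonneg measureReal_nonneg (sub_nonneg.2 measureReal_le_one)
  calc _ = ∑ i, ∫ p : (ι → κ) × (ι → κ), |(occupancy p.1 i : ℝ) - occupancy p.2 i|
        ∂((Measure.pi fun _ ↦ μ).prod (Measure.pi fun _ ↦ μ)) :=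
        integral_finsetSum _ fun _ _ ↦ .of_finite
    _ ≤ ∑ i, √(2 * (Fintype.card ι * (μ.real {i} * (1 - μ.real {i})))) :=
        Finset.sum_le_sum fun i _ ↦ integral_abs_occupancy_sub_le i
    _ ≤ √(Fintype.card κ * ∑ i, 2 * (Fintype.card ι * (μ.real {i} * (1 - μ.real {i})))) :=
        sum_sqrt_le_sqrt_card_mul_sum _ fun i ↦
          mul_nonneg zero_le_two (mul_nonneg (Nat.cast_nonneg _) (hp i))
    _ = √(2 * Fintype.card ι * (Fintype.card κ * ∑ i, μ.real {i} * (1 - μ.real {i}))) := by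
        simp only [← Finset.mul_sum]
        congr 1
        ring
    _ ≤ √(2 * Fintype.card ι * (Fintype.card κ - 1)) := by
        gcongr
        exact card_mul_sum_measureReal_mul_one_sub_le μ

end Occupancy

section LocalMatching

variable {ι κ : Type*}

lemma exists_perm_extending [Finite ι] {A B : κ → Set ι} (hA : Pairwise (Function.onFun Disjoint A))
    (hB : Pairwise (Function.onFun Disjoint B)) (e : ∀ i, A i ≃ B i) :
    ∃ σ : Equiv.Perm ι, ∀ i (a : A i), σ a = e i a := by
  classical
  let E : (⋃ i, A i) ≃ ⋃ i, B i := (Set.unionEqSigmaOfDisjoint hA).trans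
    ((Equiv.sigmaCongrRight e).trans (Set.unionEqSigmaOfDisjoint hB).symm)
  refine ⟨E.extendSubtype, fun i a ↦ ?_⟩
  have ha : (a : ι) ∈ ⋃ i, A i := Set.mem_iUnion_of_mem i a.2
  have hsigma : Set.unionEqSigmaOfDisjoint hA ⟨a, ha⟩ = ⟨i, a⟩ :=
    (Equiv.eq_symm_apply _).1 (Subtype.ext rfl)
  rw [E.extendSubtype_apply_of_mem _ ha]
  simp only [E, Equiv.trans_apply, hsigma]
  rfl

variable [Fintype ι] [DecidableEq κ]

lemma exists_subset_fiber_card_eq_min (s t : ι → κ) (i : κ) :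
    ∃ A ⊆ ({j | s j = i} : Finset ι), A.card = min (occupancy s i) (occupancy t i) :=
  Finset.exists_subset_card_eq (min_le_left _ _)

/-- A choice of as many indices with `s`-label `i` as can be matched to indices with `t`-label `i`.
The partners are taken from `matchedIndices t s i`, which has the same cardinality. -/
noncomputable def matchedIndices (s t : ι → κ) (i : κ) : Finset ι :=
  (exists_subset_fiber_card_eq_min s t i).choose

lemma matchedIndices_subset (s t : ι → κ) (i : κ) :
    matchedIndices s t i ⊆ ({j | s j = i} : Finset ι) :=
  (exists_subset_fiber_card_eq_min s t i).choose_spec.1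

lemma card_matchedIndices (s t : ι → κ) (i : κ) :
    (matchedIndices s t i).card = min (occupancy s i) (occupancy t i) :=
  (exists_subset_fiber_card_eq_min s t i).choose_spec.2

lemma card_matchedIndices_comm (s t : ι → κ) (i : κ) :
    (matchedIndices s t i).card = (matchedIndices t s i).card := by
  rw [card_matchedIndices, card_matchedIndices, min_comm]

lemma eq_of_mem_matchedIndices {s t : ι → κ} {i : κ} {j : ι} (hj : j ∈ matchedIndices s t i) :
    s j = i := by
  simpa using matchedIndices_subset s t i hj

lemma pairwise_disjoint_matchedIndices (s t : ι → κ) :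
    Pairwise (Function.onFun Disjoint fun i ↦ (matchedIndices s t i : Set ι)) :=
  fun _ _ hne ↦ Set.disjoint_left.2 fun _ hj hj' ↦
    hne ((eq_of_mem_matchedIndices hj).symm.trans (eq_of_mem_matchedIndices hj'))

lemma card_label_eq_of_maps_matchedIndices {s t : ι → κ} {i : κ} {σ : Equiv.Perm ι}
    (hσ : ∀ j ∈ matchedIndices s t i, t (σ j) = i) :
    Finset.card {j | s j = i ∧ t (σ j) = i} = min (occupancy s i) (occupancy t i) := by
  refine le_antisymm (le_min ?_ ?_) ?_
  · exact Finset.card_le_card (Finset.monotone_filter_right _ fun _ _ h ↦ h.1)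
  · exact Finset.card_le_card_of_injOn σ (fun j hj ↦ by simp_all) σ.injective.injOn
  · rw [← card_matchedIndices]
    refine Finset.card_le_card fun j hj ↦ ?_
    simpa using ⟨eq_of_mem_matchedIndices hj, hσ j hj⟩

lemma sum_le_sum_matchedIndices_add [Fintype κ] (s t : ι → κ) {c : ι → ℝ} {D : ℝ}
    (hc : ∀ j, c j ≤ D) :
    ∑ j, c j ≤ ∑ i, ∑ a : matchedIndices s t i, c a +
      D / 2 * ∑ i, |(occupancy s i : ℝ) - occupancy t i| := by
  classical
  have hcell (i : κ) : ∑ j with s j = i, c j ≤ ∑ a : matchedIndices s t i, c a +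
      D * ((occupancy s i : ℝ) - min (occupancy s i : ℝ) (occupancy t i)) := by
    have hrest := Finset.sum_le_card_nsmul
      (({j | s j = i} : Finset ι) \ matchedIndices s t i) c D fun j _ ↦ hc j
    rw [Finset.card_sdiff_of_subset (matchedIndices_subset s t i), nsmul_eq_mul, mul_comm,
      Nat.cast_sub (Finset.card_le_card (matchedIndices_subset s t i)), card_matchedIndices,
      Nat.cast_min] at hrest
    rw [← Finset.sum_sdiff (matchedIndices_subset s t i), add_comm, Finset.sum_coe_sort _ c]
    exact add_le_add_right hrest _
  calc ∑ j, c j = ∑ i, ∑ j with s j = i, c j := (Finset.sum_fiberwise _ s c).symm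
    _ ≤ _ := Finset.sum_le_sum fun i _ ↦ hcell i
    _ = _ := by
      rw [Finset.sum_add_distrib, ← Finset.mul_sum, sum_occupancy_sub_min]
      ring

end LocalMatching

local notation "ℝ²" => EuclideanSpace ℝ (Fin 2)

section UnitSquare

lemma unitSquare_eq_preimage_Icc :
    unitSquare = (MeasurableEquiv.toLp 2 (Fin 2 → ℝ)).symm ⁻¹' Set.Icc 0 1 := by
  ext p
  exact forall_and

lemma volume_unitSquare : volume unitSquare = 1 := by
  rw [unitSquare_eq_preimage_Icc,
    (EuclideanSpace.volume_preserving_symm_measurableEquiv_toLp (Fin 2)).measure_preimage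
      measurableSet_Icc.nullMeasurableSet, Real.volume_Icc_pi]
  simp

instance : IsProbabilityMeasure unifSquare :=
  ⟨by rw [unifSquare, Measure.restrict_apply_univ, volume_unitSquare]⟩

lemma isCompact_unitSquare : IsCompact unitSquare := by
  rw [unitSquare_eq_preimage_Icc]
  exact (EuclideanSpace.equiv (Fin 2) ℝ).toHomeomorph.isCompact_preimage.2 isCompact_Icc

lemma convex_unitSquare : Convex ℝ unitSquare := by
  rw [unitSquare_eq_preimage_Icc]
  exact (convex_Icc (0 : Fin 2 → ℝ) 1).linear_preimage (EuclideanSpace.equiv (Fin 2) ℝ).toLinearMap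

lemma diam_unitSquare_le : Metric.diam unitSquare ≤ √2 := by
  refine Metric.diam_le_of_forall_dist_le (Real.sqrt_nonneg 2) fun x hx y hy ↦ ?_
  have hcoord (i : Fin 2) : dist (x i) (y i) ^ 2 ≤ 1 :=
    pow_le_one₀ dist_nonneg (Real.dist_le_of_mem_Icc_01 (hx i) (hy i))
  rw [EuclideanSpace.dist_eq, Fin.sum_univ_two]
  exact Real.sqrt_le_sqrt (by linarith [hcoord 0, hcoord 1])

/-- The half-open unit square `[0,1)²`, which the grid squares partition exactly. -/
def halfOpenUnitSquare : Set ℝ² :=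
  {p | ∀ i, p i ∈ Set.Ico (0 : ℝ) 1}

lemma halfOpenUnitSquare_subset_unitSquare : halfOpenUnitSquare ⊆ unitSquare :=
  fun _ hp i ↦ Set.Ico_subset_Icc_self (hp i)

lemma halfOpenUnitSquare_eq_preimage_pi : halfOpenUnitSquare =
    (MeasurableEquiv.toLp 2 (Fin 2 → ℝ)).symm ⁻¹' Set.univ.pi fun _ ↦ Set.Ico 0 1 := by
  ext p
  exact Set.mem_univ_pi.symm

lemma measurableSet_halfOpenUnitSquare : MeasurableSet halfOpenUnitSquare := by
  rw [halfOpenUnitSquare_eq_preimage_pi]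
  exact MeasurableEquiv.measurable _ (.univ_pi fun _ ↦ measurableSet_Ico)

lemma halfOpenUnitSquare_ae_eq_unitSquare : halfOpenUnitSquare =ᵐ[volume] unitSquare := by
  rw [halfOpenUnitSquare_eq_preimage_pi, unitSquare_eq_preimage_Icc]
  exact (EuclideanSpace.volume_preserving_symm_measurableEquiv_toLp
    (Fin 2)).quasiMeasurePreserving.preimage_ae_eq Measure.univ_pi_Ico_ae_eq_Icc

lemma unifSquare_eq_restrict_halfOpenUnitSquare :
    unifSquare = volume.restrict halfOpenUnitSquare :=
  Measure.restrict_congr_set halfOpenUnitSquare_ae_eq_unitSquare.symm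

lemma ae_pi_unifSquare_mem (ι : Type*) [Fintype ι] :
    ∀ᵐ w ∂(Measure.pi fun _ : ι ↦ unifSquare), ∀ j, w j ∈ halfOpenUnitSquare := by
  have hmem : ∀ᵐ x ∂unifSquare, x ∈ halfOpenUnitSquare := by
    rw [unifSquare_eq_restrict_halfOpenUnitSquare]
    exact ae_restrict_mem measurableSet_halfOpenUnitSquare
  exact ae_all_iff.2 fun j ↦
    (Measure.quasiMeasurePreserving_eval (fun _ : ι ↦ unifSquare) j).ae hmem

lemma ae_prod_pi_unifSquare_mem (ι : Type*) [Fintype ι] :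
    ∀ᵐ ω ∂(Measure.pi fun _ : ι ↦ unifSquare).prod (Measure.pi fun _ : ι ↦ unifSquare),
      (∀ j, ω.1 j ∈ halfOpenUnitSquare) ∧ ∀ j, ω.2 j ∈ halfOpenUnitSquare :=
  (Measure.quasiMeasurePreserving_fst.ae (ae_pi_unifSquare_mem ι)).and
    (Measure.quasiMeasurePreserving_snd.ae (ae_pi_unifSquare_mem ι))

section Grid

variable {b : ℕ}

/-- The affine parametrization of the grid square `gridSquare b c` by the unit square. -/
noncomputable def gridEmbedding (b : ℕ) (c : Fin b × Fin b) (w : ℝ²) : ℝ² :=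
  (b : ℝ)⁻¹ • (w + !₂[(c.1 : ℝ), (c.2 : ℝ)])

lemma measurable_gridEmbedding (c : Fin b × Fin b) : Measurable (gridEmbedding b c) := by
  unfold gridEmbedding
  fun_prop

lemma norm_gridEmbedding_sub (c : Fin b × Fin b) (w v : ℝ²) :
    ‖gridEmbedding b c w - gridEmbedding b c v‖ = (b : ℝ)⁻¹ * ‖w - v‖ := by
  rw [gridEmbedding, gridEmbedding, ← smul_sub, add_sub_add_right_eq_sub, norm_smul, norm_inv,
    RCLike.norm_natCast]

lemma measurableSet_gridSquare (c : Fin b × Fin b) : MeasurableSet (gridSquare b c) :=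
  ((by fun_prop : Measurable fun p : ℝ² ↦ p 0) measurableSet_Ico).inter
    ((by fun_prop : Measurable fun p : ℝ² ↦ p 1) measurableSet_Ico)

variable [NeZero b]

lemma gridEmbedding_mem_gridSquare_self_iff {c : Fin b × Fin b} {w : ℝ²} :
    gridEmbedding b c w ∈ gridSquare b c ↔ w ∈ halfOpenUnitSquare := by
  have hb : (0 : ℝ) < b := Nat.cast_pos.2 (NeZero.pos b)
  simp only [gridEmbedding, gridSquare, halfOpenUnitSquare, Set.mem_ofPred_eq, Fin.forall_fin_two,
    Set.mem_Ico, PiLp.smul_apply, PiLp.add_apply, smul_eq_mul, ← div_eq_inv_mul,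
    div_le_div_iff_of_pos_right hb, div_lt_div_iff_of_pos_right hb]
  simp [add_comm]

lemma gridSquare_subset_halfOpenUnitSquare (c : Fin b × Fin b) :
    gridSquare b c ⊆ halfOpenUnitSquare := by
  have hb : (0 : ℝ) < b := Nat.cast_pos.2 (NeZero.pos b)
  have hsub (i : Fin b) : Set.Ico ((i : ℝ) / b) ((i + 1) / b) ⊆ Set.Ico 0 1 :=
    Set.Ico_subset_Ico (by positivity) ((div_le_one hb).2 (mod_cast i.2))
  exact fun p hp ↦ Fin.forall_fin_two.2 ⟨hsub _ hp.1, hsub _ hp.2⟩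

lemma existsUnique_mem_Ico_div {t : ℝ} (ht : t ∈ Set.Ico (0 : ℝ) 1) :
    ∃! i : Fin b, t ∈ Set.Ico ((i : ℝ) / b) ((i + 1) / b) := by
  have hb : (0 : ℝ) < b := Nat.cast_pos.2 (NeZero.pos b)
  have htb : 0 ≤ t * b := mul_nonneg ht.1 hb.le
  simp only [Set.mem_Ico, div_le_iff₀ hb, lt_div_iff₀ hb, ← Nat.floor_eq_iff htb]
  have hlt : ⌊t * b⌋₊ < b := (Nat.floor_lt htb).2 ((mul_lt_iff_lt_one_left hb).2 ht.2)
  exact ⟨⟨_, hlt⟩, rfl, fun i hi ↦ Fin.ext hi.symm⟩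

lemma existsUnique_mem_gridSquare {p : ℝ²} (hp : p ∈ halfOpenUnitSquare) :
    ∃! c : Fin b × Fin b, p ∈ gridSquare b c := by
  obtain ⟨i, hi, hi_unique⟩ := existsUnique_mem_Ico_div (b := b) (hp 0)
  obtain ⟨j, hj, hj_unique⟩ := existsUnique_mem_Ico_div (b := b) (hp 1)
  exact ⟨(i, j), ⟨hi, hj⟩, fun c hc ↦ Prod.ext (hi_unique _ hc.1) (hj_unique _ hc.2)⟩

lemma iUnion_gridSquare : ⋃ c, gridSquare b c = halfOpenUnitSquare :=
  Set.Subset.antisymm (Set.iUnion_subset gridSquare_subset_halfOpenUnitSquare)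
    fun _ hp ↦ Set.mem_iUnion.2 (existsUnique_mem_gridSquare hp).exists

lemma pairwise_disjoint_gridSquare : Pairwise (Function.onFun Disjoint (gridSquare b)) :=
  fun c _ hne ↦ Set.disjoint_left.2 fun _ hp hp' ↦ hne <|
    (existsUnique_mem_gridSquare (gridSquare_subset_halfOpenUnitSquare c hp)).unique hp hp'

lemma gridEmbedding_mem_gridSquare_iff {c i : Fin b × Fin b} {w : ℝ²}
    (hw : w ∈ halfOpenUnitSquare) : gridEmbedding b c w ∈ gridSquare b i ↔ c = i := by
  have hself : gridEmbedding b c w ∈ gridSquare b c := gridEmbedding_mem_gridSquare_self_iff.2 hw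
  refine ⟨fun hi ↦ ?_, fun hi ↦ hi ▸ hself⟩
  exact (existsUnique_mem_gridSquare (gridSquare_subset_halfOpenUnitSquare c hself)).unique hself hi

lemma gridEmbedding_mem_unitSquare (c : Fin b × Fin b) {w : ℝ²} (hw : w ∈ halfOpenUnitSquare) :
    gridEmbedding b c w ∈ unitSquare :=
  halfOpenUnitSquare_subset_unitSquare <| gridSquare_subset_halfOpenUnitSquare c <|
    gridEmbedding_mem_gridSquare_self_iff.2 hw

lemma volume_preimage_gridEmbedding (c : Fin b × Fin b) (S : Set ℝ²) :
    volume (gridEmbedding b c ⁻¹' S) = (b : ENNReal) ^ 2 * volume S := by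
  have hb : (b : ℝ)⁻¹ ≠ 0 := inv_ne_zero (NeZero.ne _)
  change volume ((· + !₂[(c.1 : ℝ), (c.2 : ℝ)]) ⁻¹' (((b : ℝ)⁻¹ • ·) ⁻¹' S)) = _
  rw [measure_preimage_add_right, Measure.addHaar_preimage_smul _ hb, finrank_euclideanSpace_fin,
    inv_pow, inv_inv, abs_of_nonneg (by positivity), ENNReal.ofReal_pow (Nat.cast_nonneg b),
    ENNReal.ofReal_natCast]

open ProbabilityTheory

variable (b) in
lemma measurePreserving_gridEmbedding :
    MeasurePreserving (fun q : (Fin b × Fin b) × ℝ² ↦ gridEmbedding b q.1 q.2)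
      ((uniformOn Set.univ).prod unifSquare) unifSquare := by
  have hmeas : Measurable fun q : (Fin b × Fin b) × ℝ² ↦ gridEmbedding b q.1 q.2 :=
    measurable_from_prod_countable_right measurable_gridEmbedding
  have hb : (b : ENNReal) ^ 2 ≠ 0 := pow_ne_zero 2 (NeZero.ne _)
  have hcell (S : Set ℝ²) (hS : MeasurableSet S) (c : Fin b × Fin b) :
      unifSquare (gridEmbedding b c ⁻¹' S) * uniformOn Set.univ {c} =
        volume (S ∩ gridSquare b c) := by
    have hpre : gridEmbedding b c ⁻¹' gridSquare b c = halfOpenUnitSquare :=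
      Set.ext fun _ ↦ gridEmbedding_mem_gridSquare_self_iff
    rw [unifSquare_eq_restrict_halfOpenUnitSquare,
      Measure.restrict_apply (measurable_gridEmbedding c hS), ← hpre, ← Set.preimage_inter,
      volume_preimage_gridEmbedding, uniformOn_univ, Measure.count_singleton, Fintype.card_prod,
      Fintype.card_fin, Nat.cast_mul, ← sq, one_div, mul_right_comm,
      ENNReal.mul_inv_cancel hb (by finiteness), one_mul]
  refine ⟨hmeas, Measure.ext fun S hS ↦ ?_⟩
  calc _ = ∑ c, unifSquare (gridEmbedding b c ⁻¹' S) * uniformOn Set.univ {c} := by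
        rw [Measure.map_apply hmeas hS, Measure.prod_apply (hmeas hS), lintegral_fintype]
        rfl
    _ = volume (S ∩ ⋃ c, gridSquare b c) := by
        simp only [hcell S hS]
        rw [Set.inter_iUnion, measure_iUnion (fun c c' hne ↦
          (pairwise_disjoint_gridSquare hne).mono Set.inter_subset_right Set.inter_subset_right)
          fun c ↦ hS.inter (measurableSet_gridSquare c), tsum_fintype]
    _ = unifSquare S := by
        rw [iUnion_gridSquare, unifSquare_eq_restrict_halfOpenUnitSquare, Measure.restrict_apply hS]

end Grid

end UnitSquare

section Product

variable {α β γ δ ι : Type*} [MeasurableSpace α] [MeasurableSpace β] [MeasurableSpace γ]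
  [MeasurableSpace δ] [Fintype ι]

lemma measurePreserving_prodProdProdComm (μ : Measure α) (ν : Measure β) (ρ : Measure γ)
    (τ : Measure δ) [SFinite μ] [SFinite ν] [SFinite ρ] [SFinite τ] :
    MeasurePreserving (Equiv.prodProdProdComm α β γ δ)
      ((μ.prod ν).prod (ρ.prod τ)) ((μ.prod ρ).prod (ν.prod τ)) :=
  (measurePreserving_prodAssoc μ ρ (ν.prod τ)).symm.comp <|
    ((MeasurePreserving.id μ).prod <|
      (measurePreserving_prodAssoc ρ ν τ).comp <|
        (Measure.measurePreserving_swap.prod (MeasurePreserving.id τ)).comp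
          (measurePreserving_prodAssoc ν ρ τ).symm).comp
      (measurePreserving_prodAssoc μ ν (ρ.prod τ))

lemma measurePreserving_pi_prod {f : α × β → γ} {μ : Measure α} {ν : Measure β} {ρ : Measure γ}
    [SigmaFinite μ] [SigmaFinite ν] [SigmaFinite ρ] (hf : MeasurePreserving f (μ.prod ν) ρ) :
    MeasurePreserving (fun (q : (ι → α) × (ι → β)) j ↦ f (q.1 j, q.2 j))
      ((Measure.pi fun _ ↦ μ).prod (Measure.pi fun _ ↦ ν)) (Measure.pi fun _ ↦ ρ) :=
  (measurePreserving_pi _ _ fun _ ↦ hf).comp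
    (measurePreserving_arrowProdEquivProdArrow α β ι (fun _ ↦ μ) fun _ ↦ ν).symm

lemma measurePreserving_pi_prod_pi_prod {f : α × β → γ} {μ : Measure α} {ν : Measure β}
    {ρ : Measure γ} [SigmaFinite μ] [SigmaFinite ν] [SigmaFinite ρ]
    (hf : MeasurePreserving f (μ.prod ν) ρ) :
    MeasurePreserving
      (fun q : ((ι → α) × (ι → α)) × ((ι → β) × (ι → β)) ↦
        ((fun j ↦ f (q.1.1 j, q.2.1 j), fun j ↦ f (q.1.2 j, q.2.2 j)) : (ι → γ) × (ι → γ)))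
      (((Measure.pi fun _ ↦ μ).prod (Measure.pi fun _ ↦ μ)).prod
        ((Measure.pi fun _ ↦ ν).prod (Measure.pi fun _ ↦ ν)))
      ((Measure.pi fun _ ↦ ρ).prod (Measure.pi fun _ ↦ ρ)) :=
  ((measurePreserving_pi_prod hf).prod (measurePreserving_pi_prod hf)).comp
    (measurePreserving_prodProdProdComm _ _ _ _)

lemma integral_pi_prod_pi_eq_integral_integral {f : α × β → γ} {μ : Measure α} {ν : Measure β}
    {ρ : Measure γ} [SigmaFinite μ] [SigmaFinite ν] [SigmaFinite ρ]
    (hf : MeasurePreserving f (μ.prod ν) ρ) {F : (ι → γ) × (ι → γ) → ℝ}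
    (hF : Integrable F ((Measure.pi fun _ ↦ ρ).prod (Measure.pi fun _ ↦ ρ))) :
    ∫ ω, F ω ∂((Measure.pi fun _ ↦ ρ).prod (Measure.pi fun _ ↦ ρ)) =
      ∫ p : (ι → α) × (ι → α), ∫ q : (ι → β) × (ι → β),
        F (fun j ↦ f (p.1 j, q.1 j), fun j ↦ f (p.2 j, q.2 j))
        ∂((Measure.pi fun _ ↦ ν).prod (Measure.pi fun _ ↦ ν))
        ∂((Measure.pi fun _ ↦ μ).prod (Measure.pi fun _ ↦ μ)) := by
  have hmp := measurePreserving_pi_prod_pi_prod (ι := ι) hf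
  have hint := hmp.integrable_comp_of_integrable hF
  rw [← hmp.map_eq] at hF ⊢
  rw [integral_map hmp.aemeasurable hF.aestronglyMeasurable]
  exact integral_prod _ hint

end Product

section LocalMatchingCost

lemma measurable_sInf_finite {Ω α : Type*} [MeasurableSpace Ω] [Finite α] {p : Ω → α → Prop}
    {c : Ω → α → ℝ} (hp : ∀ a, MeasurableSet {ω | p ω a}) (hc : ∀ a, Measurable fun ω ↦ c ω a) :
    Measurable fun ω ↦ sInf {v | ∃ a, p ω a ∧ v = c ω a} := by
  have hpattern : Measurable fun ω ↦ ({a | p ω a}, ω) :=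
    (measurable_set_iff.2 fun a ↦ measurableSet_setOfPred.1 (hp a)).prodMk measurable_id
  have hinf : Measurable fun q : Set α × Ω ↦ ⨅ a : q.1, c q.2 a :=
    measurable_from_prod_countable_right fun S ↦ .iInf fun a : S ↦ hc a
  convert hinf.comp hpattern using 2 with ω
  simp only [Function.comp_apply, iInf]
  congr 1
  ext v
  simp [eq_comm]

lemma measurable_natCard_subtype {Ω ι : Type*} [MeasurableSpace Ω] [Finite ι] {p : Ω → ι → Prop}
    (hp : ∀ j, MeasurableSet {ω | p ω j}) : Measurable fun ω ↦ Nat.card {j // p ω j} :=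
  (measurable_of_countable fun S : Set ι ↦ Nat.card S).comp
    (measurable_set_iff.2 fun j ↦ measurableSet_setOfPred.1 (hp j))

variable {n b : ℕ}

lemma measurableSet_isLocallyMaximal (σ : Equiv.Perm (Fin n)) :
    MeasurableSet {ω : (Fin n → ℝ²) × (Fin n → ℝ²) | IsLocallyMaximal (b := b) ω.1 ω.2 σ} := by
  have hx (ij : Fin b × Fin b) (j : Fin n) :
      MeasurableSet {ω : (Fin n → ℝ²) × (Fin n → ℝ²) | ω.1 j ∈ gridSquare b ij} :=
    (by fun_prop : Measurable fun ω : (Fin n → ℝ²) × (Fin n → ℝ²) ↦ ω.1 j)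
      (measurableSet_gridSquare ij)
  have hy (ij : Fin b × Fin b) (j : Fin n) :
      MeasurableSet {ω : (Fin n → ℝ²) × (Fin n → ℝ²) | ω.2 j ∈ gridSquare b ij} :=
    (by fun_prop : Measurable fun ω : (Fin n → ℝ²) × (Fin n → ℝ²) ↦ ω.2 j)
      (measurableSet_gridSquare ij)
  simp only [IsLocallyMaximal, Set.ofPred_forall]
  exact .iInter fun ij ↦ measurableSet_eq_fun
    (measurable_natCard_subtype fun j ↦ (hx ij j).inter (hy ij (σ j)))
    ((measurable_natCard_subtype (hx ij)).min (measurable_natCard_subtype (hy ij)))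

/-- The least total distance of a locally maximal permutation for the configuration `ω = (x, y)`. -/
noncomputable def localMatchingCost (b : ℕ) (ω : (Fin n → ℝ²) × (Fin n → ℝ²)) : ℝ :=
  sInf {v : ℝ | ∃ σ : Equiv.Perm (Fin n),
    IsLocallyMaximal (b := b) ω.1 ω.2 σ ∧ v = ∑ j : Fin n, ‖ω.1 j - ω.2 (σ j)‖}

lemma measurable_localMatchingCost : Measurable (localMatchingCost (n := n) b) :=
  measurable_sInf_finite measurableSet_isLocallyMaximal fun _ ↦ by fun_prop

lemma localMatchingCost_nonneg (ω : (Fin n → ℝ²) × (Fin n → ℝ²)) : 0 ≤ localMatchingCost b ω := by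
  apply Real.sInf_nonneg
  rintro _ ⟨σ, -, rfl⟩
  positivity

lemma localMatchingCost_le {ω : (Fin n → ℝ²) × (Fin n → ℝ²)} {σ : Equiv.Perm (Fin n)}
    (hσ : IsLocallyMaximal (b := b) ω.1 ω.2 σ) :
    localMatchingCost b ω ≤ ∑ j, ‖ω.1 j - ω.2 (σ j)‖ := by
  refine csInf_le ⟨0, ?_⟩ ⟨σ, hσ, rfl⟩
  rintro _ ⟨τ, -, rfl⟩
  positivity

lemma localMatchingCost_le_mul_diam {ω : (Fin n → ℝ²) × (Fin n → ℝ²)}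
    (hx : ∀ j, ω.1 j ∈ unitSquare) (hy : ∀ j, ω.2 j ∈ unitSquare) :
    localMatchingCost b ω ≤ n * Metric.diam unitSquare := by
  by_cases hmax : ∃ σ, IsLocallyMaximal (b := b) ω.1 ω.2 σ
  · obtain ⟨σ, hσ⟩ := hmax
    refine (localMatchingCost_le hσ).trans ?_
    have hdist := Finset.sum_le_card_nsmul Finset.univ (fun j ↦ ‖ω.1 j - ω.2 (σ j)‖)
      (Metric.diam unitSquare) fun j _ ↦ by
        rw [← dist_eq_norm]
        exact Metric.dist_le_diam_of_mem isCompact_unitSquare.isBounded (hx j) (hy (σ j))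
    rwa [Finset.card_fin, nsmul_eq_mul] at hdist
  · have hempty : {v : ℝ | ∃ σ : Equiv.Perm (Fin n), IsLocallyMaximal (b := b) ω.1 ω.2 σ ∧
        v = ∑ j : Fin n, ‖ω.1 j - ω.2 (σ j)‖} = ∅ :=
      Set.eq_empty_of_forall_notMem fun v ⟨σ, hσ, _⟩ ↦ hmax ⟨σ, hσ⟩
    rw [localMatchingCost, hempty, Real.sInf_empty]
    exact mul_nonneg (Nat.cast_nonneg n) Metric.diam_nonneg

lemma integrable_localMatchingCost :
    Integrable (localMatchingCost (n := n) b)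
      ((Measure.pi fun _ ↦ unifSquare).prod (Measure.pi fun _ ↦ unifSquare)) := by
  refine .of_bound measurable_localMatchingCost.aestronglyMeasurable
    (n * Metric.diam unitSquare) ?_
  filter_upwards [ae_prod_pi_unifSquare_mem (Fin n)] with ω hω
  rw [Real.norm_of_nonneg (localMatchingCost_nonneg ω)]
  exact localMatchingCost_le_mul_diam (fun j ↦ halfOpenUnitSquare_subset_unitSquare (hω.1 j))
    fun j ↦ halfOpenUnitSquare_subset_unitSquare (hω.2 j)

end LocalMatchingCost

section ExpectedCost

/-- The fluctuation, around its mean, of the dilation field of the unit square summed over the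
points `w j`, `j ∈ A`. -/
noncomputable def squareFluctuation {ι : Type*} (ε : ℝ) (A : Finset ι) (w : ι → ℝ²) : ℝ :=
  fluctuation (dilationField unitSquare ε) unifSquare unifSquare A w

/-- An upper bound for the cost of matching the points `q.1 a`, `a ∈ A`, of the unit square to the
points `q.2 b`, `b ∈ B`; it comes from Kantorovich duality, with potentials averaged over dilations
of the square by the factor `ε`. -/
noncomputable def squareMatchingBound {ι : Type*} (ε : ℝ) (A B : Finset ι)
    (q : (ι → ℝ²) × (ι → ℝ²)) : ℝ :=
  2 * Metric.diam unitSquare * ε * A.card +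
    (squareFluctuation ε A q.1 + squareFluctuation ε B q.2)

section Square

variable {ι : Type*} {ε : ℝ} {A B : Finset ι}

lemma exists_equiv_sum_norm_sub_le_squareMatchingBound (hε : 0 < ε) (hε1 : ε ≤ 1)
    (hcard : A.card = B.card) {q : (ι → ℝ²) × (ι → ℝ²)} (hw : ∀ j, q.1 j ∈ unitSquare)
    (hv : ∀ j, q.2 j ∈ unitSquare) :
    ∃ e : A ≃ B, ∑ a : A, ‖q.1 a - q.2 (e a)‖ ≤ squareMatchingBound ε A B q :=
  haveI : IsProbabilityMeasure (volume.restrict unitSquare) :=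
    inferInstanceAs (IsProbabilityMeasure unifSquare)
  exists_equiv_sum_norm_sub_le_fluctuation isCompact_unitSquare convex_unitSquare hε hε1 hcard
    (fun j _ ↦ hw j) fun j _ ↦ hv j

variable [Fintype ι]

lemma integrable_squareFluctuation (hε : 0 < ε) (A : Finset ι) :
    Integrable (squareFluctuation ε A) (Measure.pi fun _ ↦ unifSquare) :=
  haveI : IsProbabilityMeasure (volume.restrict unitSquare) :=
    inferInstanceAs (IsProbabilityMeasure unifSquare)
  integrable_fluctuation
    ((memLp_dilationField (μ := volume) isCompact_unitSquare hε 1).integrable le_rfl) A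

lemma integral_squareFluctuation_le (hε : 0 < ε) (hε1 : ε ≤ 1) (A : Finset ι) :
    ∫ w, squareFluctuation ε A w ∂(Measure.pi fun _ ↦ unifSquare) ≤
      √(A.card * (Metric.diam unitSquare ^ 2 / 2 * -Real.log ε)) :=
  haveI : IsProbabilityMeasure (volume.restrict unitSquare) :=
    inferInstanceAs (IsProbabilityMeasure unifSquare)
  integral_fluctuation_dilationField_le finrank_euclideanSpace_fin isCompact_unitSquare hε hε1 A

lemma integrable_squareMatchingBound (hε : 0 < ε) (A B : Finset ι) :
    Integrable (squareMatchingBound ε A B)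
      ((Measure.pi fun _ ↦ unifSquare).prod (Measure.pi fun _ ↦ unifSquare)) :=
  (integrable_const _).add <| ((integrable_squareFluctuation hε A).comp_fst _).add
    ((integrable_squareFluctuation hε B).comp_snd _)

lemma integral_squareMatchingBound_le (hε : 0 < ε) (hε1 : ε ≤ 1) (hcard : A.card = B.card) :
    ∫ q, squareMatchingBound ε A B q
        ∂((Measure.pi fun _ ↦ unifSquare).prod (Measure.pi fun _ ↦ unifSquare)) ≤
      2 * Metric.diam unitSquare * ε * A.card +
        2 * √(A.card * (Metric.diam unitSquare ^ 2 / 2 * -Real.log ε)) := by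
  have hA := (integrable_squareFluctuation hε A).comp_fst (Measure.pi fun _ : ι ↦ unifSquare)
  have hB := (integrable_squareFluctuation hε B).comp_snd (Measure.pi fun _ : ι ↦ unifSquare)
  have hBle := integral_squareFluctuation_le hε hε1 B
  rw [← hcard] at hBle
  simp only [squareMatchingBound]
  rw [integral_add (integrable_const _) (hA.fun_add hB), integral_const, probReal_univ, one_smul,
    integral_add hA hB, integral_fun_fst, integral_fun_snd, probReal_univ, one_smul, one_smul,
    two_mul √_]
  gcongr
  exact integral_squareFluctuation_le hε hε1 A

end Square

variable {n b : ℕ}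

/-- An upper bound for the cost of a locally maximal permutation when the points have cell labels
`s`, `t` and rescaled positions `q` inside their cells: the in-cell matching costs, scaled by
the side length `b⁻¹`, plus one diameter for each index left over. -/
noncomputable def localMatchingBound (ε : ℝ) (s t : Fin n → Fin b × Fin b)
    (q : (Fin n → ℝ²) × (Fin n → ℝ²)) : ℝ :=
  (b : ℝ)⁻¹ * ∑ i, squareMatchingBound ε (matchedIndices s t i) (matchedIndices t s i) q +
    Metric.diam unitSquare / 2 * ∑ i, |(occupancy s i : ℝ) - occupancy t i|

variable {ε : ℝ} {s t : Fin n → Fin b × Fin b}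

section Deterministic

variable [NeZero b]

lemma isLocallyMaximal_gridEmbedding {w v : Fin n → ℝ²} {σ : Equiv.Perm (Fin n)}
    (hw : ∀ j, w j ∈ halfOpenUnitSquare) (hv : ∀ j, v j ∈ halfOpenUnitSquare)
    (hσ : ∀ i, ∀ j ∈ matchedIndices s t i, t (σ j) = i) :
    IsLocallyMaximal (b := b) (fun j ↦ gridEmbedding b (s j) (w j))
      (fun j ↦ gridEmbedding b (t j) (v j)) σ := by
  intro i
  simp only [gridEmbedding_mem_gridSquare_iff (hw _), gridEmbedding_mem_gridSquare_iff (hv _),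
    Nat.card_eq_fintype_card, Fintype.card_subtype]
  exact card_label_eq_of_maps_matchedIndices (hσ i)

lemma localMatchingCost_gridEmbedding_le (hε : 0 < ε) (hε1 : ε ≤ 1)
    {q : (Fin n → ℝ²) × (Fin n → ℝ²)} (hw : ∀ j, q.1 j ∈ halfOpenUnitSquare)
    (hv : ∀ j, q.2 j ∈ halfOpenUnitSquare) :
    localMatchingCost b
        (fun j ↦ gridEmbedding b (s j) (q.1 j), fun j ↦ gridEmbedding b (t j) (q.2 j)) ≤
      localMatchingBound ε s t q := by
  choose e he using fun i ↦ exists_equiv_sum_norm_sub_le_squareMatchingBound hε hε1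
    (card_matchedIndices_comm s t i) (fun j ↦ halfOpenUnitSquare_subset_unitSquare (hw j))
    fun j ↦ halfOpenUnitSquare_subset_unitSquare (hv j)
  obtain ⟨σ, hσ⟩ := exists_perm_extending (pairwise_disjoint_matchedIndices s t)
    (pairwise_disjoint_matchedIndices t s) e
  have hσ_label (i) (a : matchedIndices s t i) : t (σ a) = i := by
    rw [hσ]
    exact eq_of_mem_matchedIndices (e i a).2
  refine (localMatchingCost_le <|
    isLocallyMaximal_gridEmbedding hw hv fun i j hj ↦ hσ_label i ⟨j, hj⟩).trans ?_
  have hmatched (i) (a : matchedIndices s t i) :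
      ‖gridEmbedding b (s a) (q.1 a) - gridEmbedding b (t (σ a)) (q.2 (σ a))‖ =
        (b : ℝ)⁻¹ * ‖q.1 a - q.2 (e i a)‖ := by
    rw [hσ_label, eq_of_mem_matchedIndices a.2, norm_gridEmbedding_sub, hσ]
  have hdiam (j : Fin n) : ‖gridEmbedding b (s j) (q.1 j) - gridEmbedding b (t (σ j)) (q.2 (σ j))‖ ≤
      Metric.diam unitSquare := by
    rw [← dist_eq_norm]
    exact Metric.dist_le_diam_of_mem isCompact_unitSquare.isBounded
      (gridEmbedding_mem_unitSquare _ (hw j)) (gridEmbedding_mem_unitSquare _ (hv (σ j)))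
  refine (sum_le_sum_matchedIndices_add s t hdiam).trans ?_
  simp only [hmatched, ← Finset.mul_sum, localMatchingBound]
  gcongr with i
  exact he i

end Deterministic

lemma integrable_localMatchingBound (hε : 0 < ε) (s t : Fin n → Fin b × Fin b) :
    Integrable (localMatchingBound ε s t)
      ((Measure.pi fun _ ↦ unifSquare).prod (Measure.pi fun _ ↦ unifSquare)) :=
  ((integrable_finsetSum _ fun _ _ ↦ integrable_squareMatchingBound hε _ _).const_mul _).add
    (integrable_const _)

lemma sum_integral_squareMatchingBound_le (hε : 0 < ε) (hε1 : ε ≤ 1)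
    (s t : Fin n → Fin b × Fin b) :
    ∑ i, ∫ q, squareMatchingBound ε (matchedIndices s t i) (matchedIndices t s i) q
        ∂((Measure.pi fun _ ↦ unifSquare).prod (Measure.pi fun _ ↦ unifSquare)) ≤
      2 * Metric.diam unitSquare * ε * n +
        2 * √((b : ℝ) ^ 2 * (n * (Metric.diam unitSquare ^ 2 / 2 * -Real.log ε))) := by
  have hL : 0 ≤ Metric.diam unitSquare ^ 2 / 2 * -Real.log ε :=
    mul_nonneg (by positivity) (neg_nonneg.2 (Real.log_nonpos hε.le hε1))
  have hcard := sum_min_occupancy_le s t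
  have hsqrt := sum_sqrt_min_occupancy_mul_le s t hL
  simp only [Fintype.card_prod, Fintype.card_fin, ← pow_two, Nat.cast_pow] at hcard hsqrt
  calc _ ≤ ∑ i, (2 * Metric.diam unitSquare * ε * min (occupancy s i : ℝ) (occupancy t i) +
        2 * √(min (occupancy s i : ℝ) (occupancy t i) *
          (Metric.diam unitSquare ^ 2 / 2 * -Real.log ε))) := by
        gcongr with i
        rw [← Nat.cast_min, ← card_matchedIndices]
        exact integral_squareMatchingBound_le hε hε1 (card_matchedIndices_comm s t i)
    _ ≤ _ := by
        rw [Finset.sum_add_distrib, ← Finset.mul_sum, ← Finset.mul_sum]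
        gcongr

lemma integral_localMatchingBound_le (hε : 0 < ε) (hε1 : ε ≤ 1) (s t : Fin n → Fin b × Fin b) :
    ∫ q, localMatchingBound ε s t q
        ∂((Measure.pi fun _ ↦ unifSquare).prod (Measure.pi fun _ ↦ unifSquare)) ≤
      (b : ℝ)⁻¹ * (2 * Metric.diam unitSquare * ε * n +
          2 * √((b : ℝ) ^ 2 * (n * (Metric.diam unitSquare ^ 2 / 2 * -Real.log ε)))) +
        Metric.diam unitSquare / 2 * ∑ i, |(occupancy s i : ℝ) - occupancy t i| := by
  have hint (i : Fin b × Fin b) :=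
    integrable_squareMatchingBound hε (matchedIndices s t i) (matchedIndices t s i)
  simp only [localMatchingBound]
  rw [integral_add ((integrable_finsetSum _ fun i _ ↦ hint i).const_mul _) (integrable_const _),
    integral_const, probReal_univ, one_smul, integral_const_mul,
    integral_finsetSum _ fun i _ ↦ hint i]
  gcongr
  exact sum_integral_squareMatchingBound_le hε hε1 s t

lemma integral_localMatchingCost_gridEmbedding_le [NeZero b] (hε : 0 < ε) (hε1 : ε ≤ 1)
    (s t : Fin n → Fin b × Fin b) :
    ∫ q : (Fin n → ℝ²) × (Fin n → ℝ²), localMatchingCost b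
        (fun j ↦ gridEmbedding b (s j) (q.1 j), fun j ↦ gridEmbedding b (t j) (q.2 j))
        ∂((Measure.pi fun _ ↦ unifSquare).prod (Measure.pi fun _ ↦ unifSquare)) ≤
      (b : ℝ)⁻¹ * (2 * Metric.diam unitSquare * ε * n +
          2 * √((b : ℝ) ^ 2 * (n * (Metric.diam unitSquare ^ 2 / 2 * -Real.log ε)))) +
        Metric.diam unitSquare / 2 * ∑ i, |(occupancy s i : ℝ) - occupancy t i| := by
  refine le_trans ?_ (integral_localMatchingBound_le hε hε1 s t)
  refine integral_mono_of_nonneg (.of_forall fun _ ↦ localMatchingCost_nonneg _)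
    (integrable_localMatchingBound hε s t) ?_
  filter_upwards [ae_prod_pi_unifSquare_mem (Fin n)] with q hq
  exact localMatchingCost_gridEmbedding_le hε hε1 hq.1 hq.2

lemma integral_localMatchingCost_le [NeZero b] (hε : 0 < ε) (hε1 : ε ≤ 1) :
    ∫ ω, localMatchingCost (n := n) b ω
        ∂((Measure.pi fun _ ↦ unifSquare).prod (Measure.pi fun _ ↦ unifSquare)) ≤
      (b : ℝ)⁻¹ * (2 * Metric.diam unitSquare * ε * n +
          2 * √((b : ℝ) ^ 2 * (n * (Metric.diam unitSquare ^ 2 / 2 * -Real.log ε)))) +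
        Metric.diam unitSquare / 2 * √(2 * n * ((b : ℝ) ^ 2 - 1)) := by
  have hocc := integral_sum_abs_occupancy_sub_le (ι := Fin n)
    (μ := ProbabilityTheory.uniformOn (Set.univ : Set (Fin b × Fin b)))
  simp only [Fintype.card_prod, Fintype.card_fin, ← pow_two, Nat.cast_pow] at hocc
  rw [integral_pi_prod_pi_eq_integral_integral (measurePreserving_gridEmbedding b)
    integrable_localMatchingCost]
  calc _ ≤ ∫ p : (Fin n → Fin b × Fin b) × (Fin n → Fin b × Fin b),
        ((b : ℝ)⁻¹ * (2 * Metric.diam unitSquare * ε * n +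
          2 * √((b : ℝ) ^ 2 * (n * (Metric.diam unitSquare ^ 2 / 2 * -Real.log ε)))) +
        Metric.diam unitSquare / 2 * ∑ i, |(occupancy p.1 i : ℝ) - occupancy p.2 i|)
        ∂((Measure.pi fun _ ↦ ProbabilityTheory.uniformOn Set.univ).prod
          (Measure.pi fun _ ↦ ProbabilityTheory.uniformOn Set.univ)) :=
        integral_mono .of_finite .of_finite fun p ↦
          integral_localMatchingCost_gridEmbedding_le hε hε1 p.1 p.2
    _ ≤ _ := by
        rw [integral_add .of_finite .of_finite, integral_const, probReal_univ, one_smul,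
          integral_const_mul]
        gcongr

lemma one_le_mul_log {x : ℝ} (hx : 2 ≤ x) : 1 ≤ x * Real.log x := by
  nlinarith [Real.log_two_gt_d9, Real.log_le_log zero_lt_two hx]

lemma half_mul_sqrt_two_mul_le {d : ℝ} (hd : d ≤ √2) (x : ℝ) : d / 2 * √(2 * x) ≤ √x :=
  calc d / 2 * √(2 * x) ≤ √2 / 2 * √(2 * x) := by gcongr
    _ = √x := by
      rw [Real.sqrt_mul zero_le_two, ← mul_assoc, div_mul_eq_mul_div,
        Real.mul_self_sqrt zero_le_two, div_self two_ne_zero, one_mul]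

lemma integral_localMatchingCost_le_sqrt [NeZero b] (hn : 2 ≤ n) :
    ∫ ω, localMatchingCost (n := n) b ω
        ∂((Measure.pi fun _ ↦ unifSquare).prod (Measure.pi fun _ ↦ unifSquare)) ≤
      5 * √(n * Real.log n) + √(n * ((b : ℝ) ^ 2 - 1)) := by
  have hn' : (2 : ℝ) ≤ n := mod_cast hn
  have hn0 : (0 : ℝ) < n := by positivity
  have hn1 : (1 : ℝ) ≤ n := one_le_two.trans hn'
  have hb : (1 : ℝ) ≤ b := mod_cast NeZero.one_le
  have hb0 : (b : ℝ) ≠ 0 := NeZero.ne _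
  have hbias : (b : ℝ)⁻¹ * (2 * Metric.diam unitSquare) ≤ 3 * √(n * Real.log n) :=
    calc (b : ℝ)⁻¹ * (2 * Metric.diam unitSquare) ≤ 1 * (2 * (3 / 2)) := by
          gcongr
          · exact inv_le_one_of_one_le₀ hb
          · exact diam_unitSquare_le.trans (Real.sqrt_le_iff.2 (by norm_num))
      _ ≤ 3 * √(n * Real.log n) := by linarith [Real.one_le_sqrt.2 (one_le_mul_log hn')]
  have hfluct : √(n * (Metric.diam unitSquare ^ 2 / 2 * Real.log n)) ≤ √(n * Real.log n) := by
    have hdiam : Metric.diam unitSquare ^ 2 / 2 ≤ 1 := by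
      linarith [(Real.le_sqrt Metric.diam_nonneg zero_le_two).1 diam_unitSquare_le]
    gcongr
    exact mul_le_of_le_one_left (Real.log_nonneg hn1) hdiam
  have hleftover : Metric.diam unitSquare / 2 * √(2 * n * ((b : ℝ) ^ 2 - 1)) ≤
      √(n * ((b : ℝ) ^ 2 - 1)) := by
    rw [mul_assoc]
    exact half_mul_sqrt_two_mul_le diam_unitSquare_le _
  have hε := integral_localMatchingCost_le (n := n) (b := b) (inv_pos.2 hn0)
    (inv_le_one_of_one_le₀ hn1)
  rw [inv_mul_cancel_right₀ hn0.ne', Real.log_inv, neg_neg, Real.sqrt_mul (sq_nonneg _),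
    Real.sqrt_sq (Nat.cast_nonneg _), mul_add, mul_left_comm (2 : ℝ),
    inv_mul_cancel_left₀ hb0] at hε
  linarith

end ExpectedCost

/-- there is a constant `C > 0` such that for all `n ≥ 2` and `b ≥ 1`
(with `m = b²`), for `2n` mutually independent uniform points `x₁,…,x_n, y₁,…,y_n` in the
unit square (modeled by the product measure on pairs of configurations `ω = (x, y)`),
partitioning the unit square into the `m` half-open congruent squares of side `1/b`, the
expectation of the minimum, over all locally maximal permutations `σ`, of the total distance
`Σ_j ‖x_j − y_{σ(j)}‖₂` is at most `C·sqrt(n·log n) + sqrt(n·(m−1))`. -/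
theorem stmt_19 :
    ∃ C : ℝ, 0 < C ∧ ∀ n : ℕ, 2 ≤ n → ∀ b : ℕ, 1 ≤ b →
      ∫ ω : (Fin n → EuclideanSpace ℝ (Fin 2)) × (Fin n → EuclideanSpace ℝ (Fin 2)),
          sInf {v : ℝ | ∃ σ : Equiv.Perm (Fin n),
            IsLocallyMaximal (b := b) ω.1 ω.2 σ ∧ v = ∑ j : Fin n, ‖ω.1 j - ω.2 (σ j)‖}
          ∂((Measure.pi fun _ : Fin n => unifSquare).prod
              (Measure.pi fun _ : Fin n => unifSquare))
        ≤ C * Real.sqrt ((n : ℝ) * Real.log n) +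
            Real.sqrt ((n : ℝ) * (((b : ℝ) ^ 2) - 1)) := by
  exact ⟨5, by norm_num, fun n hn b hb ↦
    haveI : NeZero b := ⟨Nat.one_le_iff_ne_zero.1 hb⟩
    integral_localMatchingCost_le_sqrt hn⟩
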